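/- Let H be a non-semisimple Hopf algebra over k of dimension pq, where p ≤ q are odd primes, with antipode S. Then S^{4p} = id_H, and the trace of the linear map S^{2p} on H equals p²·d (as an element of k) for some odd integer d. -/

import Mathlib

open scoped TensorProduct

/-- A group-like element of a coalgebra: a nonzero element `a` with `Δ a = a ⊗ a`. -/
def IsGroupLike (k : Type*) {H : Type*} [CommSemiring k] [AddCommMonoid H] [Module k H]
    [Coalgebra k H] (a : H) : Prop :=
  a ≠ 0 ∧ Coalgebra.comul (R := k) a = a ⊗ₜ[k] a

/-- The convolution product on the dual of a coalgebra. -/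
noncomputable def conv {k H : Type*} [CommSemiring k] [AddCommMonoid H] [Module k H]
    [Coalgebra k H] (f g : Module.Dual k H) : Module.Dual k H :=
  LinearMap.mul' k k ∘ₗ TensorProduct.map f g ∘ₗ Coalgebra.comul

/-- `l ∈ H*` is a right integral of `H*`: `l * β = β(1) • l` for the convolution product. -/
def IsRightIntegralDual (k : Type*) {H : Type*} [CommSemiring k] [Semiring H]
    [HopfAlgebra k H] (l : Module.Dual k H) : Prop :=
  ∀ f : Module.Dual k H, conv l f = f 1 • l

/-- `Λ ∈ H` is a left integral of `H`: `a * Λ = ε(a) • Λ` for all `a`. -/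
def IsLeftIntegral (k : Type*) {H : Type*} [CommSemiring k] [Semiring H]
    [HopfAlgebra k H] (L : H) : Prop :=
  ∀ a : H, a * L = Coalgebra.counit (R := k) a • L

/-- `Λ ∈ H` is a right integral of `H`: `Λ * a = ε(a) • Λ` for all `a`. -/
def IsRightIntegral (k : Type*) {H : Type*} [CommSemiring k] [Semiring H]
    [HopfAlgebra k H] (L : H) : Prop :=
  ∀ a : H, L * a = Coalgebra.counit (R := k) a • L

/-- `g` is the distinguished group-like element of `H`: it is group-like and
`β * λ = β(g) • λ` for some nonzero right integral `λ` of `H*`. -/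
def IsDistinguishedGroupLike (k : Type*) {H : Type*} [CommSemiring k] [Semiring H]
    [HopfAlgebra k H] (g : H) : Prop :=
  IsGroupLike k g ∧ ∃ l : Module.Dual k H, l ≠ 0 ∧ IsRightIntegralDual k l ∧
    ∀ f : Module.Dual k H, conv f l = f g • l

/-- `α` is the distinguished group-like element of `H*`: an algebra map `H → k` with
`Λ * a = α(a) • Λ` for some nonzero left integral `Λ` of `H`. -/
def IsDistinguishedGroupLikeDual (k : Type*) {H : Type*} [CommSemiring k] [Semiring H]
    [HopfAlgebra k H] (α : H →ₐ[k] k) : Prop :=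
  ∃ L : H, L ≠ 0 ∧ IsLeftIntegral k L ∧ ∀ a : H, L * a = α a • L

/-- `IsHopfIndex k g n` : `n` is the index of the Hopf algebra `H` with distinguished
group-like element `g`, i.e. the smallest positive integer `n` with `S ^ (4 n) = id` and
`g ^ n = 1`, where `S` is the antipode. -/
def IsHopfIndex (k : Type*) {H : Type*} [CommSemiring k] [Semiring H] [HopfAlgebra k H]
    (g : H) (n : ℕ) : Prop :=
  0 < n ∧ (HopfAlgebra.antipode (R := k) (A := H) : Module.End k H) ^ (4 * n) = 1 ∧ g ^ n = 1 ∧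
    ∀ m : ℕ, 0 < m → (HopfAlgebra.antipode (R := k) (A := H) : Module.End k H) ^ (4 * m) = 1 →
      g ^ m = 1 → n ≤ m

/-- The simultaneous eigenspace `H^ω_{a,i,j} = {u ∈ H | S² u = (-1)^a ω^i • u, u * g = ω^j • u}`
for `(a,i,j) ∈ ℤ/2 × ℤ/n × ℤ/n`. -/
noncomputable def hopfEigenspace {k H : Type*} [CommRing k] [Ring H] [HopfAlgebra k H]
    (g : H) (ω : k) {n : ℕ} (t : ZMod 2 × ZMod n × ZMod n) : Submodule k H :=
  Module.End.eigenspace ((HopfAlgebra.antipode (R := k) (A := H) : Module.End k H) ^ 2)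
      ((-1 : k) ^ t.1.val * ω ^ t.2.1.val) ⊓
    Module.End.eigenspace (LinearMap.mulRight k g : Module.End k H) (ω ^ t.2.2.val)

/-- Convolution powers of an element of the dual; the zeroth power is the counit,
the unit of the convolution algebra. -/
noncomputable def convPow {k H : Type*} [CommSemiring k] [AddCommMonoid H] [Module k H]
    [Coalgebra k H] (f : Module.Dual k H) : ℕ → Module.Dual k H
  | 0 => Coalgebra.counit
  | m + 1 => conv f (convPow f m)

namespace HopfPQ

section RootsOfUnity

open Polynomial

variable {k : Type*} [Field k] [CharZero k]

/-- A rational polynomial vanishing at one primitive `m`-th root of unity vanishes at all of them,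
in any two fields of characteristic zero. -/
lemma aeval_primitiveRoot_transfer {K : Type*} [Field K] [CharZero K] {m : ℕ} (hm : 0 < m)
    {ω : k} (hω : IsPrimitiveRoot ω m) {ζ : K} (hζ : IsPrimitiveRoot ζ m) (P : ℚ[X])
    (h : aeval ω P = 0) : aeval ζ P = 0 := by
  have h1 : minpoly ℚ ω ∣ P := minpoly.dvd ℚ ω h
  rw [← cyclotomic_eq_minpoly_rat hω hm, cyclotomic_eq_minpoly_rat hζ hm] at h1
  obtain ⟨Q, rfl⟩ := h1
  simp

/-- If `n` many `m`-th roots of unity sum to `n`, all of them are `1`. -/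
lemma multiplicity_eq_zero_of_sum_eq {m : ℕ} {ω : k} (hω : IsPrimitiveRoot ω m) (d : ℕ → ℕ)
    (h : ∑ l ∈ Finset.range m, (d l : k) * ω ^ l = ∑ l ∈ Finset.range m, (d l : k))
    {l : ℕ} (hl : 0 < l) (hlm : l < m) : d l = 0 := by
  have hm : 0 < m := by omega
  have hζ := Complex.isPrimitiveRoot_exp m hm.ne'
  set ζ := Complex.exp (2 * Real.pi * Complex.I / m)
  have key := aeval_primitiveRoot_transfer hm hω hζ
    (∑ l ∈ Finset.range m, C (d l : ℚ) * (1 - X ^ l)) (by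
      simp only [map_sum, map_mul, map_sub, map_pow, aeval_X, mul_sub, mul_one,
        Finset.sum_sub_distrib]
      simp [h])
  simp only [map_sum, map_mul, map_sub, map_pow, aeval_X, map_one] at key
  have hre := congrArg Complex.re key
  have hterm : ∀ j, (((aeval ζ) (C (d j : ℚ))) * (1 - ζ ^ j)).re = d j * (1 - (ζ ^ j).re) := by
    intro j
    simp
  have hnorm : ∀ j, ‖ζ ^ j‖ = 1 := fun j => by
    rw [norm_pow, hζ.norm'_eq_one hm.ne', one_pow]
  rw [Complex.re_sum, Complex.zero_re, Finset.sum_eq_zero_iff_of_nonneg] at hre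
  · have h0 := hre l (Finset.mem_range.2 hlm)
    rw [hterm] at h0
    rcases mul_eq_zero.1 h0 with h0 | h0
    · exact_mod_cast h0
    · exfalso
      have h1 : (ζ ^ l).re = 1 := by linarith
      have h2 : ζ ^ l = 1 := by
        have h3 := Complex.sq_norm (ζ ^ l)
        rw [hnorm, Complex.normSq_apply, h1] at h3
        apply Complex.ext
        · simpa using h1
        · simp only [Complex.one_im]
          nlinarith
      exact hζ.pow_ne_one_of_pos_of_lt hl.ne' hlm h2
  · intro j _
    rw [hterm]
    have := Complex.re_le_norm (ζ ^ j)
    rw [hnorm] at this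
    exact mul_nonneg (by positivity) (by linarith)

/-- For a prime `r`, the only rational linear relation between the `r`-th roots of unity is that
their sum vanishes. -/
lemma coeff_eq_of_sum_eq_zero {r : ℕ} (hr : r.Prime) {ω : k} (hω : IsPrimitiveRoot ω r)
    (c : ℕ → ℤ) (h : ∑ l ∈ Finset.range r, (c l : k) * ω ^ l = 0) {i : ℕ} (hi : i < r) :
    c i = c 0 := by
  have := Fact.mk hr
  set P : ℚ[X] := ∑ l ∈ Finset.range r, C (c l : ℚ) * X ^ l with hP
  have h0 : aeval ω P = 0 := by
    simpa [hP, map_sum] using h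
  have h1 : cyclotomic r ℚ ∣ P := by
    rw [cyclotomic_eq_minpoly_rat hω hr.pos]
    exact minpoly.dvd ℚ ω h0
  obtain ⟨Q, hQ⟩ := h1
  have hcoeff : ∀ j, j < r → P.coeff j = c j := by
    intro j hj
    simp [hP, finsetSum_coeff, coeff_X_pow, hj]
  have hdeg : P.natDegree < r := by
    refine lt_of_le_of_lt (natDegree_sum_le_of_forall_le (n := r - 1) _ _ fun l hl => ?_)
      (Nat.sub_lt hr.pos one_pos)
    exact (natDegree_C_mul_X_pow_le _ _).trans (by have := Finset.mem_range.1 hl; omega)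
  have hQ0 : Q.natDegree = 0 := by
    by_cases hQz : Q = 0
    · simp [hQz]
    · have := natDegree_mul (cyclotomic_ne_zero r ℚ) hQz
      rw [← hQ, natDegree_cyclotomic, Nat.totient_prime hr] at this
      omega
  rw [eq_C_of_natDegree_eq_zero hQ0] at hQ
  have hall : ∀ j, j < r → (c j : ℚ) = Q.coeff 0 := by
    intro j hj
    rw [← hcoeff j hj, hQ, coeff_mul_C, cyclotomic_prime]
    simp [finsetSum_coeff, coeff_X_pow, hj]
  have := (hall i hi).trans (hall 0 hr.pos).symm
  exact_mod_cast this

end RootsOfUnity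

section FiniteOrder

variable {k : Type*} [Field k] [CharZero k] {V : Type*} [AddCommGroup V] [Module k V]

open LinearMap

/-- The average of the first `m` powers of an endomorphism. -/
noncomputable def cycAvg (m : ℕ) (U : Module.End k V) : Module.End k V :=
  (m : k)⁻¹ • ∑ a ∈ Finset.range m, U ^ a

lemma mul_cycAvg {m : ℕ} {U : Module.End k V} (hU : U ^ m = 1) : U * cycAvg m U = cycAvg m U := by
  have h := mul_geom_sum U m
  rw [hU, sub_self, sub_mul, one_mul, sub_eq_zero] at h
  rw [cycAvg, mul_smul_comm, h]

lemma isIdempotentElem_cycAvg {m : ℕ} (hm : 0 < m) {U : Module.End k V} (hU : U ^ m = 1) :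
    IsIdempotentElem (cycAvg m U) := by
  have h : ∀ a, U ^ a * cycAvg m U = cycAvg m U := by
    intro a
    induction a with
    | zero => simp
    | succ a ih => rw [pow_succ, mul_assoc, mul_cycAvg hU, ih]
  have hm' : (m : k) ≠ 0 := by exact_mod_cast hm.ne'
  rw [IsIdempotentElem]
  nth_rewrite 1 [cycAvg]
  rw [smul_mul_assoc, Finset.sum_mul, Finset.sum_congr rfl fun a _ => h a, Finset.sum_const,
    Finset.card_range, ← Nat.cast_smul_eq_nsmul k, smul_smul, inv_mul_cancel₀ hm', one_smul]

lemma commute_cycAvg {m : ℕ} {U W : Module.End k V} (h : Commute W U) : Commute W (cycAvg m U) :=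
  (Commute.sum_right _ _ _ fun a _ => h.pow_right a).smul_right _

/-- The projection onto the `ω ^ i`-eigenspace of an endomorphism `T` with `T ^ m = 1`. -/
noncomputable def eigenProj (m : ℕ) (ω : k) (T : Module.End k V) (i : ℕ) : Module.End k V :=
  cycAvg m ((ω ^ i)⁻¹ • T)

lemma smul_pow_eq_one {m : ℕ} {ω : k} (hω : ω ^ m = 1) {T : Module.End k V} (hT : T ^ m = 1)
    (i : ℕ) : ((ω ^ i)⁻¹ • T) ^ m = 1 := by
  rw [smul_pow, hT, inv_pow, ← pow_mul, mul_comm, pow_mul, hω, one_pow, inv_one, one_smul]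

lemma isIdempotentElem_eigenProj {m : ℕ} (hm : 0 < m) {ω : k} (hω : ω ^ m = 1)
    {T : Module.End k V} (hT : T ^ m = 1) (i : ℕ) : IsIdempotentElem (eigenProj m ω T i) :=
  isIdempotentElem_cycAvg hm (smul_pow_eq_one hω hT i)

lemma mul_eigenProj {m : ℕ} (hm : 0 < m) {ω : k} (hω : ω ^ m = 1)
    {T : Module.End k V} (hT : T ^ m = 1) (i : ℕ) :
    T * eigenProj m ω T i = ω ^ i • eigenProj m ω T i := by
  have h0 : ω ≠ 0 := by
    rintro rfl
    simp [hm.ne'] at hω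
  have h := mul_cycAvg (smul_pow_eq_one hω hT i)
  rw [smul_mul_assoc] at h
  change T * cycAvg m _ = ω ^ i • cycAvg m _
  nth_rewrite 2 [← h]
  rw [smul_smul, mul_inv_cancel₀ (pow_ne_zero _ h0), one_smul]

lemma commute_eigenProj {m : ℕ} {ω : k} {T W : Module.End k V} (h : Commute W T) (i : ℕ) :
    Commute W (eigenProj m ω T i) :=
  commute_cycAvg (h.smul_right _)

lemma sum_eigenProj {m : ℕ} (hm : 0 < m) {ω : k} (hω : IsPrimitiveRoot ω m)
    (T : Module.End k V) : ∑ i ∈ Finset.range m, eigenProj m ω T i = 1 := by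
  have hm' : (m : k) ≠ 0 := by exact_mod_cast hm.ne'
  have h0 : ω ≠ 0 := hω.ne_zero hm.ne'
  have hsum : ∀ a ∈ Finset.range m, ∑ i ∈ Finset.range m, ((ω ^ i)⁻¹ • T) ^ a
      = if a = 0 then (m : k) • (1 : Module.End k V) else 0 := by
    intro a ha
    split_ifs with h
    · subst h
      simp [Nat.cast_smul_eq_nsmul]
    · have h1 : ∀ i, ((ω ^ i)⁻¹ • T) ^ a = ((ω ^ a)⁻¹) ^ i • T ^ a := by
        intro i
        rw [smul_pow, inv_pow, inv_pow, ← pow_mul, ← pow_mul, mul_comm]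
      rw [Finset.sum_congr rfl fun i _ => h1 i, ← Finset.sum_smul]
      have h2 : (ω ^ a)⁻¹ - 1 ≠ 0 := by
        rw [sub_ne_zero]
        intro h3
        exact hω.pow_ne_one_of_pos_of_lt h (Finset.mem_range.1 ha) (inv_eq_one.1 h3)
      have h3 := mul_geom_sum ((ω ^ a)⁻¹) m
      rw [inv_pow, ← pow_mul, mul_comm a, pow_mul, hω.pow_eq_one, one_pow, inv_one, sub_self] at h3
      rw [(mul_eq_zero.1 h3).resolve_left h2, zero_smul]
  simp only [eigenProj, cycAvg]
  rw [← Finset.smul_sum, Finset.sum_comm, Finset.sum_congr rfl hsum,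
    Finset.sum_ite_eq' _ _ fun _ => (m : k) • (1 : Module.End k V),
    if_pos (Finset.mem_range.2 hm), smul_smul, inv_mul_cancel₀ hm', one_smul]

variable [FiniteDimensional k V]

lemma trace_of_isIdempotentElem {E : Module.End k V} (hE : IsIdempotentElem E) :
    trace k V E = (Module.finrank k (range E) : k) :=
  (LinearMap.IsIdempotentElem.isProj_range E hE).trace

lemma eq_zero_of_isIdempotentElem_of_trace {E : Module.End k V} (hE : IsIdempotentElem E)
    (h : trace k V E = 0) : E = 0 := by
  rw [trace_of_isIdempotentElem hE, Nat.cast_eq_zero, Submodule.finrank_eq_zero] at h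
  exact LinearMap.range_eq_bot.1 h

lemma trace_mul_eq_sum {m : ℕ} (hm : 0 < m) {ω : k} (hω : IsPrimitiveRoot ω m)
    {T : Module.End k V} (hT : T ^ m = 1) (W : Module.End k V) :
    trace k V (W * T) = ∑ i ∈ Finset.range m, trace k V (W * eigenProj m ω T i) * ω ^ i := by
  have h : W * T = ∑ i ∈ Finset.range m, ω ^ i • (W * eigenProj m ω T i) := by
    conv_lhs => rw [← mul_one T, ← sum_eigenProj hm hω T, Finset.mul_sum, Finset.mul_sum]
    refine Finset.sum_congr rfl fun i _ => ?_
    rw [mul_eigenProj hm hω.pow_eq_one hT, mul_smul_comm]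
  rw [h, map_sum]
  exact Finset.sum_congr rfl fun i _ => by rw [map_smul, smul_eq_mul, mul_comm]

lemma trace_eq_sum_eigenProj {m : ℕ} (hm : 0 < m) {ω : k} (hω : IsPrimitiveRoot ω m)
    (T W : Module.End k V) :
    trace k V W = ∑ i ∈ Finset.range m, trace k V (W * eigenProj m ω T i) := by
  rw [← map_sum, ← Finset.mul_sum, sum_eigenProj hm hω, mul_one]

lemma trace_mul_cycAvg (m : ℕ) (T W : Module.End k V) :
    trace k V (W * cycAvg m T) = (m : k)⁻¹ * ∑ a ∈ Finset.range m, trace k V (W * T ^ a) := by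
  rw [cycAvg, mul_smul_comm, map_smul, Finset.mul_sum, map_sum, smul_eq_mul]

lemma trace_mul_eigenProj (m : ℕ) (ω : k) (T W : Module.End k V) (i : ℕ) :
    trace k V (W * eigenProj m ω T i) =
      (m : k)⁻¹ * ∑ a ∈ Finset.range m, ((ω ^ i)⁻¹) ^ a * trace k V (W * T ^ a) := by
  rw [eigenProj, trace_mul_cycAvg]
  congr 1
  exact Finset.sum_congr rfl fun a _ => by rw [smul_pow, mul_smul_comm, map_smul, smul_eq_mul]

variable [IsAlgClosed k]

lemma exists_primitiveRoot {m : ℕ} (hm : 0 < m) : ∃ ω : k, IsPrimitiveRoot ω m := by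
  have : NeZero m := ⟨hm.ne'⟩
  have : NeZero (m : k) := ⟨by exact_mod_cast hm.ne'⟩
  exact HasEnoughRootsOfUnity.exists_primitiveRoot k m

/-- An endomorphism of finite order whose trace is the dimension is the identity. -/
lemma eq_one_of_trace_eq_finrank {m : ℕ} (hm : 0 < m) {U : Module.End k V} (hU : U ^ m = 1)
    (h : trace k V U = Module.finrank k V) : U = 1 := by
  obtain ⟨ω, hω⟩ := exists_primitiveRoot (k := k) hm
  have hid := fun i => isIdempotentElem_eigenProj hm hω.pow_eq_one hU i
  have h1 := trace_mul_eq_sum hm hω hU 1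
  have h2 := trace_eq_sum_eigenProj hm hω U 1
  simp only [one_mul, trace_of_isIdempotentElem (hid _)] at h1 h2
  rw [h] at h1
  rw [LinearMap.trace_one] at h2
  have h3 : ∀ l ∈ Finset.range m, l ≠ 0 → eigenProj m ω U l = 0 := by
    intro l hl hl0
    apply eq_zero_of_isIdempotentElem_of_trace (hid l)
    rw [trace_of_isIdempotentElem (hid _), Nat.cast_eq_zero]
    exact multiplicity_eq_zero_of_sum_eq hω
      (fun l => Module.finrank k (range (eigenProj m ω U l))) (h1.symm.trans h2)
      (Nat.pos_of_ne_zero hl0) (Finset.mem_range.1 hl)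
  have h4 := sum_eigenProj hm hω U
  rw [Finset.sum_eq_single_of_mem 0 (Finset.mem_range.2 hm) h3] at h4
  have h5 := mul_eigenProj hm hω.pow_eq_one hU 0
  rwa [h4, pow_zero, one_smul, mul_one] at h5

lemma trace_eq_zero_of_sq {m : ℕ} (hm : 0 < m) {U : Module.End k V} (hU : U ^ m = 1)
    (h : trace k V U ^ 2 = Module.finrank k V * trace k V U) (hne : U ≠ 1) :
    trace k V U = 0 := by
  by_contra h0
  refine hne (eq_one_of_trace_eq_finrank hm hU (mul_right_cancel₀ h0 ?_))
  rw [← h, sq]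

lemma trace_cycAvg_of_free {m : ℕ} (hm : 0 < m) {T : Module.End k V}
    (h : ∀ j, 0 < j → j < m → trace k V (T ^ j) = 0) :
    (m : k) * trace k V (cycAvg m T) = Module.finrank k V := by
  have hm' : (m : k) ≠ 0 := by exact_mod_cast hm.ne'
  have h1 := trace_mul_cycAvg m T 1
  simp only [one_mul] at h1
  rw [h1, mul_inv_cancel_left₀ hm', Finset.sum_eq_single_of_mem 0 (Finset.mem_range.2 hm)]
  · rw [pow_zero, LinearMap.trace_one]
  · intro b hb hb0
    exact h b (Nat.pos_of_ne_zero hb0) (Finset.mem_range.1 hb)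

end FiniteOrder

section Count

variable {k : Type*} [Field k] [CharZero k] {V : Type*} [AddCommGroup V] [Module k V]
  [FiniteDimensional k V]

open LinearMap

/-- The dimensions of the two eigenspaces of an involution on the range of a projection. -/
lemma exists_trace_involution {τ P : Module.End k V} (hτ : τ ^ 2 = 1) (hP : IsIdempotentElem P)
    (hc : Commute τ P) :
    ∃ a b : ℕ, trace k V P = a + b ∧ trace k V (τ * P) = a - b := by
  have hτ' : (-τ) ^ 2 = 1 := by rw [neg_sq, hτ]
  have h1 : IsIdempotentElem (cycAvg 2 τ * P) :=
    (isIdempotentElem_cycAvg two_pos hτ).mul_of_commute (commute_cycAvg hc.symm).symm hP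
  have h2 : IsIdempotentElem (cycAvg 2 (-τ) * P) :=
    (isIdempotentElem_cycAvg two_pos hτ').mul_of_commute
      (commute_cycAvg hc.symm.neg_right).symm hP
  refine ⟨Module.finrank k (range (cycAvg 2 τ * P)), Module.finrank k (range (cycAvg 2 (-τ) * P)),
    ?_, ?_⟩
  · rw [← trace_of_isIdempotentElem h1, ← trace_of_isIdempotentElem h2, ← map_add]
    congr 1
    simp only [cycAvg, Finset.sum_range_succ, Finset.sum_range_zero, zero_add, pow_zero, pow_one]
    rw [← add_mul, ← smul_add]
    have : (1 + τ + (1 + -τ) : Module.End k V) = (2 : k) • 1 := by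
      rw [two_smul]; abel
    rw [this, smul_smul]
    norm_num
  · rw [← trace_of_isIdempotentElem h1, ← trace_of_isIdempotentElem h2, ← map_sub]
    congr 1
    simp only [cycAvg, Finset.sum_range_succ, Finset.sum_range_zero, zero_add, pow_zero, pow_one]
    rw [← sub_mul, ← smul_sub]
    have : (1 + τ - (1 + -τ) : Module.End k V) = (2 : k) • τ := by
      rw [two_smul]; abel
    rw [this, smul_smul]
    norm_num

variable [IsAlgClosed k]

/-- The eigenvalue count behind the trace formula: `σ` and `T` are commuting operators of order
dividing `2 * r` and `r` whose mixed traces are those of `S²` and of a free action. -/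
lemma trace_pow_eq_sq_mul_odd {r s : ℕ} (hr : r.Prime) (hrodd : Odd r) (hs : Odd s)
    {σ T : Module.End k V} (hc : Commute σ T) (hT : T ^ r = 1) (hσ : σ ^ (2 * r) = 1)
    (hN : Module.finrank k V = r * s) (hσT : ∀ j, trace k V (σ * T ^ j) = 0)
    (hTj : ∀ j, 0 < j → j < r → trace k V (T ^ j) = 0)
    (hτT : trace k V (σ ^ r * T) ^ 2 = trace k V (σ ^ r) * trace k V (σ ^ r * T)) :
    r ≤ s ∧ ∃ d : ℤ, Odd d ∧ trace k V (σ ^ r) = (r : k) ^ 2 * d := by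
  obtain ⟨ω, hω⟩ := exists_primitiveRoot (k := k) hr.pos
  have hr0 : (r : k) ≠ 0 := by exact_mod_cast hr.ne_zero
  set τ := σ ^ r with hτdef
  set ρ := σ ^ (r + 1) with hρdef
  have hτ2 : τ ^ 2 = 1 := by rw [hτdef, ← pow_mul, mul_comm, hσ]
  have hρr : ρ ^ r = 1 := by
    obtain ⟨t, ht⟩ := hrodd.add_odd odd_one
    have : (r + 1) * r = (2 * r) * t := by rw [ht]; ring
    rw [hρdef, ← pow_mul, this, pow_mul, hσ, one_pow]
  have hτρ : τ * ρ = σ := by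
    rw [hτdef, hρdef, ← pow_add, show r + (r + 1) = 2 * r + 1 by ring, pow_succ, hσ, one_mul]
  have cτρ : Commute τ ρ := (Commute.refl σ).pow_pow _ _
  have cτT : Commute τ T := hc.pow_left _
  have cρT : Commute ρ T := hc.pow_left _
  set E := eigenProj r ω ρ with hE
  set F := eigenProj r ω T with hF
  have cEF : ∀ i l, Commute (F l) (E i) := fun i l =>
    commute_eigenProj (commute_eigenProj cρT l).symm i
  have idP : ∀ i l, IsIdempotentElem (F l * E i) := fun i l =>
    (isIdempotentElem_eigenProj hr.pos hω.pow_eq_one hT l).mul_of_commute (cEF i l)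
      (isIdempotentElem_eigenProj hr.pos hω.pow_eq_one hρr i)
  have cτP : ∀ i l, Commute τ (F l * E i) := fun i l =>
    (commute_eigenProj cτT l).mul_right (commute_eigenProj cτρ i)
  choose a b hab hab' using fun i l => exists_trace_involution hτ2 (idP i l) (cτP i l)
  -- the signed multiplicities do not depend on the eigenvalue of `ρ`
  have hconst : ∀ l, ∀ i < r, (a i l : ℤ) - b i l = a 0 l - b 0 l := by
    intro l i hi
    refine coeff_eq_of_sum_eq_zero hr hω (fun i => (a i l : ℤ) - b i l) ?_ hi
    have h1 := trace_mul_eq_sum hr.pos hω hρr (τ * F l)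
    rw [mul_assoc, ← (commute_eigenProj cρT l).eq, ← mul_assoc, hτρ, trace_mul_eigenProj] at h1
    simp only [hσT, mul_zero, Finset.sum_const_zero] at h1
    rw [h1]
    refine Finset.sum_congr rfl fun i _ => ?_
    rw [mul_assoc, hab']
    push_cast
    rfl
  set C : ℕ → ℤ := fun l => (a 0 l : ℤ) - b 0 l with hC
  have hsum : ∀ l, s = ∑ i ∈ Finset.range r, (a i l + b i l) := by
    intro l
    have h1 := trace_mul_eigenProj r ω T 1 l
    have h2 := trace_eq_sum_eigenProj hr.pos hω ρ (F l)
    simp only [one_mul] at h1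
    rw [Finset.sum_eq_single_of_mem 0 (Finset.mem_range.2 hr.pos) (by
      intro j hj hj0
      rw [hTj j (Nat.pos_of_ne_zero hj0) (Finset.mem_range.1 hj), mul_zero]), pow_zero, pow_zero,
      one_mul, LinearMap.trace_one, hN, Nat.cast_mul, inv_mul_cancel_left₀ hr0] at h1
    rw [h1] at h2
    have h3 : (s : k) = ((∑ i ∈ Finset.range r, (a i l + b i l) : ℕ) : k) := by
      rw [h2]
      push_cast
      exact Finset.sum_congr rfl fun i _ => hab i l
    exact_mod_cast h3
  have hsumC : ∀ l, (s : ℤ) = r * C l + 2 * ∑ i ∈ Finset.range r, (b i l : ℤ) := by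
    intro l
    have h1 : ∀ i ∈ Finset.range r, ((a i l + b i l : ℕ) : ℤ) = C l + 2 * b i l := by
      intro i hi
      have := hconst l i (Finset.mem_range.1 hi)
      simp only [hC]
      push_cast
      linarith
    rw [hsum l, Nat.cast_sum, Finset.sum_congr rfl h1, Finset.sum_add_distrib, Finset.sum_const,
      Finset.card_range, nsmul_eq_mul, Finset.mul_sum]
  have hsumC' : ∀ l, (s : ℤ) = -(r * C l) + 2 * ∑ i ∈ Finset.range r, (a i l : ℤ) := by
    intro l
    have h1 : ∀ i ∈ Finset.range r, ((a i l + b i l : ℕ) : ℤ) = -C l + 2 * a i l := by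
      intro i hi
      have := hconst l i (Finset.mem_range.1 hi)
      simp only [hC]
      push_cast
      linarith
    rw [hsum l, Nat.cast_sum, Finset.sum_congr rfl h1, Finset.sum_add_distrib, Finset.sum_const,
      Finset.card_range, nsmul_eq_mul, Finset.mul_sum, mul_neg]
  have hCodd : ∀ l, Odd (C l) := by
    intro l
    have h1 : Odd (s : ℤ) := by exact_mod_cast hs
    rw [hsumC l, Int.odd_add] at h1
    exact (Int.odd_mul.1 (h1.2 (even_two_mul _))).2
  have hCne : ∀ l, C l ≠ 0 := fun l h => by
    have := hCodd l
    rw [h] at this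
    exact absurd this (by decide)
  have hrs : r ≤ s := by
    have h1 := hsumC 0
    have h2 := hsumC' 0
    have hb : 0 ≤ ∑ i ∈ Finset.range r, (b i 0 : ℤ) := Finset.sum_nonneg fun _ _ => by positivity
    have ha : 0 ≤ ∑ i ∈ Finset.range r, (a i 0 : ℤ) := Finset.sum_nonneg fun _ _ => by positivity
    have hrpos : (0 : ℤ) < r := by exact_mod_cast hr.pos
    rcases lt_or_gt_of_ne (hCne 0) with h3 | h3
    · have h4 : C 0 ≤ -1 := by omega
      have : (r : ℤ) ≤ s := by nlinarith
      exact_mod_cast this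
    · have h4 : 1 ≤ C 0 := by omega
      have : (r : ℤ) ≤ s := by nlinarith
      exact_mod_cast this
  have hτF : ∀ l, trace k V (τ * F l) = r * C l := by
    intro l
    have h1 := trace_eq_sum_eigenProj hr.pos hω ρ (τ * F l)
    have h2 : ∀ i ∈ Finset.range r, trace k V (τ * F l * E i) = C l := by
      intro i hi
      rw [mul_assoc, hab']
      have h3 : (a i l : ℤ) - b i l = C l := hconst l i (Finset.mem_range.1 hi)
      rw [← h3]
      push_cast
      rfl
    rw [h1, Finset.sum_congr rfl h2, Finset.sum_const, Finset.card_range, nsmul_eq_mul]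
  have hτtr : trace k V τ = r * ((∑ l ∈ Finset.range r, C l : ℤ) : k) := by
    rw [trace_eq_sum_eigenProj hr.pos hω T τ, Finset.sum_congr rfl fun l _ => hτF l,
      ← Finset.mul_sum]
    push_cast
    rfl
  have hτTtr : trace k V (τ * T) = r * ∑ l ∈ Finset.range r, (C l : k) * ω ^ l := by
    rw [trace_mul_eq_sum hr.pos hω hT, Finset.sum_congr rfl fun l _ => by rw [hτF l, mul_assoc],
      ← Finset.mul_sum]
  have hX : ∑ l ∈ Finset.range r, (C l : k) * ω ^ l = 0 := by
    by_contra hX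
    set X := ∑ l ∈ Finset.range r, (C l : k) * ω ^ l with hXdef
    set D := ∑ l ∈ Finset.range r, C l with hD
    rw [hτTtr, hτtr] at hτT
    have h1 : X = (D : k) := by
      have : ((r : k) * (r * X)) * (X - D) = 0 := by linear_combination hτT
      rcases mul_eq_zero.1 this with h | h
      · exact absurd h (mul_ne_zero hr0 (mul_ne_zero hr0 hX))
      · exact sub_eq_zero.1 h
    have h2 : ∑ l ∈ Finset.range r, ((C l - if l = 0 then D else 0 : ℤ) : k) * ω ^ l = 0 := by
      simp only [Int.cast_sub, sub_mul, Finset.sum_sub_distrib]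
      rw [← hXdef, Finset.sum_eq_single_of_mem 0 (Finset.mem_range.2 hr.pos) (by
        intro j _ hj
        simp [hj]), h1]
      simp
    have h3 : ∀ l < r, l ≠ 0 → C l = C 0 - D := by
      intro l hl hl0
      have := coeff_eq_of_sum_eq_zero hr hω (fun l => C l - if l = 0 then D else 0) h2 hl
      simpa [hl0] using this
    obtain ⟨r', rfl⟩ : ∃ r', r = r' + 1 := ⟨r - 1, by have := hr.pos; omega⟩
    have h4 : D = r' * (C 0 - D) + C 0 := by
      conv_lhs => rw [hD, Finset.sum_range_succ']
      rw [Finset.sum_congr rfl fun l hl => h3 (l + 1)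
        (by have := Finset.mem_range.1 hl; omega) (by omega)]
      simp [mul_sub]
    have h5 : ((r' : ℤ) + 1) * (C 0 - D) = 0 := by linear_combination -h4
    have h6 := h3 1 (by have := hr.two_le; omega) one_ne_zero
    rw [← h6] at h5
    rcases mul_eq_zero.1 h5 with h | h
    · omega
    · exact hCne 1 h
  refine ⟨hrs, C 0, hCodd 0, ?_⟩
  rw [hτtr, Finset.sum_congr rfl fun l hl =>
    coeff_eq_of_sum_eq_zero hr hω C hX (Finset.mem_range.1 hl)]
  simp
  ring

end Count

section Convolution

open Coalgebra LinearMap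

variable {k : Type*} [Field k] {C : Type*} [AddCommGroup C] [Module k C] [Coalgebra k C]
  {A : Type*} [Ring A] [Algebra k A] {B : Type*} [Ring B] [Algebra k B]

/-- The convolution product of linear maps from a coalgebra to an algebra. -/
noncomputable def cv (f g : C →ₗ[k] A) : C →ₗ[k] A :=
  mul' k A ∘ₗ TensorProduct.map f g ∘ₗ comul

/-- A functional viewed as a scalar-valued map to an algebra. -/
noncomputable def et (A : Type*) [Ring A] [Algebra k A] (f : C →ₗ[k] k) : C →ₗ[k] A :=
  Algebra.linearMap k A ∘ₗ f

lemma et_apply (f : C →ₗ[k] k) (x : C) : et A f x = f x • (1 : A) := by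
  simp [et, Algebra.algebraMap_eq_smul_one]

lemma cv_repr {ι : Type*} {x : C} (R : Coalgebra.Repr k x ι) (f g : C →ₗ[k] A) :
    cv f g x = ∑ i ∈ R.index, f (R.left i) * g (R.right i) := by
  simp [cv, ← R.eq]

lemma cv_assoc (f g h : C →ₗ[k] A) : cv (cv f g) h = cv f (cv g h) :=
  congrArg WithConv.ofConv
    (mul_assoc (WithConv.toConv f) (WithConv.toConv g) (WithConv.toConv h))

lemma cv_et_counit (f : C →ₗ[k] A) : cv f (et A counit) = f :=
  congrArg WithConv.ofConv (mul_one (WithConv.toConv f))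

lemma et_counit_cv (f : C →ₗ[k] A) : cv (et A counit) f = f :=
  congrArg WithConv.ofConv (one_mul (WithConv.toConv f))

lemma cv_et_repr {ι : Type*} {x : C} (R : Coalgebra.Repr k x ι) (f : C →ₗ[k] A) (h : C →ₗ[k] k) :
    cv f (et A h) x = ∑ i ∈ R.index, h (R.right i) • f (R.left i) := by
  simp [cv_repr R, et_apply]

lemma et_cv_repr {ι : Type*} {x : C} (R : Coalgebra.Repr k x ι) (f : C →ₗ[k] A) (h : C →ₗ[k] k) :
    cv (et A h) f x = ∑ i ∈ R.index, h (R.left i) • f (R.right i) := by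
  simp [cv_repr R, et_apply]

lemma et_self (f : C →ₗ[k] k) : et k f = f := by
  ext x
  simp [et_apply]

lemma mulLeft_comp_cv (a : A) (f g : C →ₗ[k] A) :
    mulLeft k a ∘ₗ cv f g = cv (mulLeft k a ∘ₗ f) g := by
  ext x
  simp [cv_repr (ℛ k x), mul_assoc]

lemma mulRight_comp_cv (a : A) (f g : C →ₗ[k] A) :
    mulRight k a ∘ₗ cv f g = cv f (mulRight k a ∘ₗ g) := by
  ext x
  simp [cv_repr (ℛ k x), mul_assoc]

lemma algHom_comp_cv (L : A →ₐ[k] B) (f g : C →ₗ[k] A) :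
    L.toLinearMap ∘ₗ cv f g = cv (L.toLinearMap ∘ₗ f) (L.toLinearMap ∘ₗ g) := by
  ext x
  simp [cv_repr (ℛ k x)]

/-- The action `y ↦ f(y₁) y₂` of a functional on a coalgebra, linear in `f`. -/
noncomputable def actL : (C →ₗ[k] k) →ₗ[k] (C →ₗ[k] C) where
  toFun f := (TensorProduct.lid k C).toLinearMap ∘ₗ rTensor C f ∘ₗ comul
  map_add' f g := by
    ext x
    simp [rTensor_add]
  map_smul' c f := by
    ext x
    simp [rTensor_smul]

/-- The action `y ↦ y₁ f(y₂)` of a functional on a coalgebra, linear in `f`. -/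
noncomputable def actR : (C →ₗ[k] k) →ₗ[k] (C →ₗ[k] C) where
  toFun f := (TensorProduct.rid k C).toLinearMap ∘ₗ lTensor C f ∘ₗ comul
  map_add' f g := by
    ext x
    simp [lTensor_add]
  map_smul' c f := by
    ext x
    simp [lTensor_smul]

lemma actL_repr {ι : Type*} {x : C} (R : Coalgebra.Repr k x ι) (f : C →ₗ[k] k) :
    actL f x = ∑ i ∈ R.index, f (R.left i) • R.right i := by
  simp [actL, ← R.eq]

lemma actR_repr {ι : Type*} {x : C} (R : Coalgebra.Repr k x ι) (f : C →ₗ[k] k) :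
    actR f x = ∑ i ∈ R.index, f (R.right i) • R.left i := by
  simp [actR, ← R.eq]

lemma comp_actL (g : C →ₗ[k] A) (f : C →ₗ[k] k) : g ∘ₗ actL f = cv (et A f) g := by
  ext x
  rw [comp_apply, actL_repr (ℛ k x), et_cv_repr (ℛ k x), map_sum]
  simp

lemma comp_actR (g : C →ₗ[k] A) (f : C →ₗ[k] k) : g ∘ₗ actR f = cv g (et A f) := by
  ext x
  rw [comp_apply, actR_repr (ℛ k x), cv_et_repr (ℛ k x), map_sum]
  simp

/-- Functionals separate points. -/
lemma eq_of_forall_dual {x y : C} (h : ∀ f : C →ₗ[k] k, f x = f y) : x = y :=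
  Module.forall_dual_apply_eq_zero_iff k (x - y) |>.1 (fun f => by rw [map_sub, h, sub_self])
    |> sub_eq_zero.1

lemma dual_actL (g f : C →ₗ[k] k) (x : C) : g (actL f x) = cv f g x := by
  have := congrArg (fun F => F x) (comp_actL (A := k) g f)
  simpa [et_self] using this

lemma dual_actR (g f : C →ₗ[k] k) (x : C) : g (actR f x) = cv g f x := by
  have := congrArg (fun F => F x) (comp_actR (A := k) g f)
  simpa [et_self] using this

lemma actR_comp (f h : C →ₗ[k] k) : actR f ∘ₗ actR h = actR (cv f h) := by
  ext x
  refine eq_of_forall_dual (k := k) fun g => ?_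
  rw [comp_apply, dual_actR, dual_actR, dual_actR, cv_assoc]

lemma actL_comp (f h : C →ₗ[k] k) : actL f ∘ₗ actL h = actL (cv h f) := by
  ext x
  refine eq_of_forall_dual (k := k) fun g => ?_
  rw [comp_apply, dual_actL, dual_actL, dual_actL, cv_assoc]

lemma actL_counit : actL (counit (R := k) (A := C)) = LinearMap.id := by
  ext x
  refine eq_of_forall_dual (k := k) fun g => ?_
  rw [dual_actL, ← et_self (counit (R := k) (A := C)), et_counit_cv, id_apply]

lemma actR_counit : actR (counit (R := k) (A := C)) = LinearMap.id := by
  ext x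
  refine eq_of_forall_dual (k := k) fun g => ?_
  rw [dual_actR, ← et_self (counit (R := k) (A := C)), cv_et_counit, id_apply]

/-- The functional `f` is recovered from its action through the counit. -/
lemma counit_actL (f : C →ₗ[k] k) (x : C) : counit (R := k) (actL f x) = f x := by
  rw [dual_actL, ← et_self (counit (R := k) (A := C)), cv_et_counit]

lemma counit_actR (f : C →ₗ[k] k) (x : C) : counit (R := k) (actR f x) = f x := by
  rw [dual_actR, ← et_self (counit (R := k) (A := C)), et_counit_cv]

end Convolution

section Hopf

open Coalgebra LinearMap HopfAlgebra

variable {k : Type*} [Field k] {H : Type*} [Ring H] [HopfAlgebra k H]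

lemma cv_antipode_id : cv (antipode k) (LinearMap.id : H →ₗ[k] H) = et H counit :=
  congrArg WithConv.ofConv (LinearMap.antipode_mul_id (R := k) (C := H))

lemma cv_id_antipode : cv (LinearMap.id : H →ₗ[k] H) (antipode k) = et H counit :=
  congrArg WithConv.ofConv (LinearMap.id_mul_antipode (R := k) (C := H))

/-- The product of two representations of coproducts. -/
def reprMul {ι κ : Type*} {x y : H} (X : Coalgebra.Repr k x ι) (Y : Coalgebra.Repr k y κ) :
    Coalgebra.Repr k (x * y) (ι × κ) where
  index := X.index ×ˢ Y.index
  left i := X.left i.1 * Y.left i.2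
  right i := X.right i.1 * Y.right i.2
  eq := by
    rw [Bialgebra.comul_mul, Finset.sum_product, ← X.eq, ← Y.eq, Finset.sum_mul_sum]
    simp

lemma comul_eq_cv : (comul : H →ₗ[k] H ⊗[k] H) =
    cv (Algebra.TensorProduct.includeLeft : H →ₐ[k] H ⊗[k] H).toLinearMap
      (Algebra.TensorProduct.includeRight : H →ₐ[k] H ⊗[k] H).toLinearMap := by
  ext x
  simp [cv_repr (ℛ k x), ← (ℛ k x).eq]

lemma comul_comp_antipode : comul ∘ₗ antipode k =
    cv ((Algebra.TensorProduct.includeRight : H →ₐ[k] H ⊗[k] H).toLinearMap ∘ₗ antipode k)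
      ((Algebra.TensorProduct.includeLeft : H →ₐ[k] H ⊗[k] H).toLinearMap ∘ₗ antipode k) := by
  set j₁ : H →ₐ[k] H ⊗[k] H := Algebra.TensorProduct.includeLeft
  set j₂ : H →ₐ[k] H ⊗[k] H := Algebra.TensorProduct.includeRight
  have h : ∀ j : H →ₐ[k] H ⊗[k] H,
      cv (j.toLinearMap ∘ₗ antipode k) j.toLinearMap = et (H ⊗[k] H) counit := by
    intro j
    have := algHom_comp_cv j (antipode k) LinearMap.id
    rw [cv_antipode_id, comp_id] at this
    rw [← this]
    ext x
    simp [et_apply]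
  have h1 : cv (cv (j₂.toLinearMap ∘ₗ antipode k) (j₁.toLinearMap ∘ₗ antipode k)) comul =
      et (H ⊗[k] H) counit := by
    rw [comul_eq_cv, ← cv_assoc, cv_assoc _ _ j₁.toLinearMap, h, cv_et_counit, h]
  have h2 : cv comul (comul ∘ₗ antipode k) = et (H ⊗[k] H) (counit (R := k) (A := H)) :=
    congrArg WithConv.ofConv (LinearMap.comul_right_inv (R := k) (C := H))
  rw [← et_counit_cv (comul ∘ₗ antipode k : H →ₗ[k] H ⊗[k] H), ← h1, cv_assoc, h2, cv_et_counit]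

/-- The antipode reverses coproducts. -/
noncomputable def reprAntipode {ι : Type*} {x : H} (X : Coalgebra.Repr k x ι) :
    Coalgebra.Repr k (antipode k x) ι where
  index := X.index
  left i := antipode k (X.right i)
  right i := antipode k (X.left i)
  eq := by
    have := congrArg (fun F => F x) (comul_comp_antipode (k := k) (H := H))
    simp only [comp_apply] at this
    rw [this, cv_repr X]
    simp

lemma cv_comp_antipode (f g : H →ₗ[k] k) :
    cv f g ∘ₗ antipode k = cv (g ∘ₗ antipode k) (f ∘ₗ antipode k) := by
  ext x
  rw [comp_apply, cv_repr (reprAntipode (ℛ k x)), cv_repr (ℛ k x)]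
  simp [reprAntipode, mul_comm]

lemma actL_mul {ι : Type*} {y : H} (Y : Coalgebra.Repr k y ι) (f : H →ₗ[k] k) (a : H) :
    actL f (a * y) = ∑ j ∈ Y.index, actL (f ∘ₗ mulRight k (Y.left j)) a * Y.right j := by
  rw [actL_repr (reprMul (ℛ k a) Y)]
  simp only [actL_repr (ℛ k a), reprMul, Finset.sum_product, Finset.sum_mul]
  rw [Finset.sum_comm]
  simp

lemma actR_mul {ι : Type*} {y : H} (Y : Coalgebra.Repr k y ι) (f : H →ₗ[k] k) (a : H) :
    actR f (a * y) = ∑ j ∈ Y.index, actR (f ∘ₗ mulRight k (Y.right j)) a * Y.left j := by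
  rw [actR_repr (reprMul (ℛ k a) Y)]
  simp only [actR_repr (ℛ k a), reprMul, Finset.sum_product, Finset.sum_mul]
  rw [Finset.sum_comm]
  simp

lemma sum_mul_antipode {ι : Type*} {a : H} (X : Coalgebra.Repr k a ι) :
    ∑ i ∈ X.index, X.left i * antipode k (X.right i) = counit (R := k) a • (1 : H) :=
  sum_mul_antipode_eq_smul X

lemma sum_antipode_mul {ι : Type*} {a : H} (X : Coalgebra.Repr k a ι) :
    ∑ i ∈ X.index, antipode k (X.left i) * X.right i = counit (R := k) a • (1 : H) :=
  sum_antipode_mul_eq_smul X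

lemma antipode_sq_actL_mulLeft {ι : Type*} {a : H} (X : Coalgebra.Repr k a ι) (f : H →ₗ[k] k)
    (y : H) : antipode k (antipode k (actL (f ∘ₗ mulLeft k a) y)) =
      ∑ i ∈ X.index, antipode k (X.right i) *
        antipode k (antipode k (actL f (X.left i * y))) := by
  have key : ∀ h : H →ₗ[k] k, cv (antipode k ∘ₗ actL h) LinearMap.id = et H h := by
    intro h
    rw [comp_actL, cv_assoc, cv_antipode_id, cv_et_counit]
  have h1 : ∀ i ∈ X.index, antipode k (X.right i) * antipode k (antipode k (actL f (X.left i * y)))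
      = ∑ j ∈ (ℛ k y).index, antipode k (antipode k ((ℛ k y).right j) *
        ((antipode k ∘ₗ actL (f ∘ₗ mulRight k ((ℛ k y).left j))) (X.left i) * X.right i)) := by
    intro i _
    rw [actL_mul (ℛ k y), ← antipode_mul_antidistrib, map_sum, Finset.sum_mul, map_sum]
    simp [antipode_mul_antidistrib, mul_assoc]
  rw [Finset.sum_congr rfl h1, Finset.sum_comm, actL_repr (ℛ k y), map_sum, map_sum]
  refine Finset.sum_congr rfl fun j _ => ?_
  rw [← map_sum, ← Finset.mul_sum]
  have h2 := cv_repr X (antipode k ∘ₗ actL (f ∘ₗ mulRight k ((ℛ k y).left j))) LinearMap.id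
  rw [key, et_apply] at h2
  simp only [id_apply] at h2
  rw [← h2]
  simp

section Integrals

variable [FiniteDimensional k H]

/-- The element `Λ` of `H` with `f(Λ) = Tr(y ↦ f(y₁) S²(y₂) x)` for all functionals `f`. -/
noncomputable def traceIntegral (k : Type*) [Field k] {H : Type*} [Ring H] [HopfAlgebra k H]
    [FiniteDimensional k H] (x : H) : H :=
  (Module.evalEquiv k H).symm (trace k H ∘ₗ
    mulLeft k (mulRight k x * antipode k * antipode k : Module.End k H) ∘ₗ actL)

lemma dual_traceIntegral (x : H) (f : H →ₗ[k] k) : f (traceIntegral k x) =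
    trace k H (mulRight k x * antipode k * antipode k * actL f : Module.End k H) := by
  have h := (Module.evalEquiv k H).apply_symm_apply (trace k H ∘ₗ
    mulLeft k (mulRight k x * antipode k * antipode k : Module.End k H) ∘ₗ actL)
  exact congrArg (fun F => F f) h

lemma mul_traceIntegral (x a : H) :
    a * traceIntegral k x = counit (R := k) a • traceIntegral k x := by
  refine eq_of_forall_dual (k := k) fun f => ?_
  have h1 : f (a * traceIntegral k x) = (f ∘ₗ mulLeft k a) (traceIntegral k x) := rfl
  rw [h1, dual_traceIntegral, map_smul, dual_traceIntegral]
  have h2 : (mulRight k x * antipode k * antipode k * actL (f ∘ₗ mulLeft k a) : Module.End k H) =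
      ∑ i ∈ (ℛ k a).index, (mulRight k x * (mulLeft k (antipode k ((ℛ k a).right i)) *
        (antipode k * antipode k * actL f))) * mulLeft k ((ℛ k a).left i) := by
    ext y
    simp only [Module.End.mul_apply, antipode_sq_actL_mulLeft (ℛ k a), LinearMap.sum_apply,
      mulRight_apply, mulLeft_apply, Finset.sum_mul]
  have h3 : ∀ i, trace k H ((mulRight k x * (mulLeft k (antipode k ((ℛ k a).right i)) *
        (antipode k * antipode k * actL f))) * mulLeft k ((ℛ k a).left i)) =
      trace k H (mulLeft k ((ℛ k a).left i * antipode k ((ℛ k a).right i)) *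
        (mulRight k x * antipode k * antipode k * actL f : Module.End k H)) := by
    intro i
    rw [trace_mul_comm]
    congr 1
    ext y
    simp [mul_assoc]
  rw [h2, map_sum, Finset.sum_congr rfl fun i _ => h3 i, ← map_sum, ← map_smul]
  congr 1
  ext y
  simp only [LinearMap.sum_apply, Module.End.mul_apply, mulLeft_apply, ← Finset.sum_mul,
    sum_mul_antipode (ℛ k a), LinearMap.smul_apply, smul_mul_assoc, one_mul]

lemma counit_traceIntegral_one : counit (R := k) (traceIntegral k (1 : H)) =
    trace k H (antipode k * antipode k : Module.End k H) := by
  rw [dual_traceIntegral]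
  congr 1
  ext y
  simp [actL_counit]

lemma exists_leftIntegral (k H : Type*) [Field k] [Ring H] [HopfAlgebra k H]
    [FiniteDimensional k H] [Nontrivial H] :
    ∃ L : H, L ≠ 0 ∧ ∀ a : H, a * L = counit (R := k) a • L := by
  by_contra hne
  push Not at hne
  have h0 : ∀ x : H, traceIntegral k x = 0 := fun x => by
    by_contra hx
    obtain ⟨a, ha⟩ := hne _ hx
    exact ha (mul_traceIntegral x a)
  let b := Module.finBasis k H
  have h1 : (∑ i, (mulRight k (antipode k (b i)) * antipode k * antipode k * actL (b.coord i)) :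
      Module.End k H) = (counit (R := k) (A := H)).smulRight (1 : H) := by
    ext y
    simp only [LinearMap.sum_apply, Module.End.mul_apply, actL_repr (ℛ k y), map_sum, map_smul,
      mulRight_apply, Finset.sum_mul, smulRight_apply, smul_mul_assoc]
    rw [Finset.sum_comm]
    have : ∀ j ∈ (ℛ k y).index, ∑ i, b.coord i ((ℛ k y).left j) •
        (antipode k (antipode k ((ℛ k y).right j)) * antipode k (b i)) =
        antipode k ((ℛ k y).left j * antipode k ((ℛ k y).right j)) := by
      intro j _
      conv_rhs => rw [antipode_mul_antidistrib, ← b.sum_repr ((ℛ k y).left j), map_sum,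
        Finset.mul_sum]
      simp
    rw [Finset.sum_congr rfl this, ← map_sum, sum_mul_antipode, map_smul, antipode_one]
  have h2 := congrArg (trace k H) h1
  rw [map_sum, trace_smulRight] at h2
  simp only [← dual_traceIntegral, h0, map_zero, Finset.sum_const_zero] at h2
  simp at h2

end Integrals

/-- The Casimir property of a left integral. -/
lemma casimir {L : H} (hL : ∀ a : H, a * L = counit (R := k) a • L) {ι : Type*}
    (X : Coalgebra.Repr k L ι) (a : H) :
    ∑ i ∈ X.index, (a * X.left i) ⊗ₜ[k] antipode k (X.right i) =
      ∑ i ∈ X.index, X.left i ⊗ₜ[k] (antipode k (X.right i) * a) := by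
  set j₂ : H →ₐ[k] H ⊗[k] H := Algebra.TensorProduct.includeRight with hj₂
  let U : H →ₗ[k] H ⊗[k] H := ∑ i ∈ X.index,
    (TensorProduct.mk k H H).flip (antipode k (X.right i)) ∘ₗ mulRight k (X.left i)
  have hU : ∀ a, U a = ∑ i ∈ X.index, (a * X.left i) ⊗ₜ[k] antipode k (X.right i) := by
    intro a
    simp [U]
  have h1 : cv U (j₂.toLinearMap ∘ₗ antipode k) =
      mulLeft k (U 1) ∘ₗ et (H ⊗[k] H) counit := by
    ext a
    rw [cv_repr (ℛ k a), comp_apply, et_apply, mulLeft_apply, mul_smul_comm, mul_one, hU 1]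
    simp only [one_mul, hU, hj₂, comp_apply, AlgHom.toLinearMap_apply,
      Algebra.TensorProduct.includeRight_apply, Finset.sum_mul,
      Algebra.TensorProduct.tmul_mul_tmul, mul_one, ← antipode_mul_antidistrib]
    have e1 := (reprMul (ℛ k a) X).eq
    have e0 : comul (R := k) (a * L) = counit (R := k) a •
        ∑ i ∈ X.index, X.left i ⊗ₜ[k] X.right i := by rw [hL, map_smul, X.eq]
    rw [e0] at e1
    have e2 := congrArg (TensorProduct.map LinearMap.id (antipode k)) e1
    simpa [reprMul, Finset.sum_product] using e2
  have h2 : cv (j₂.toLinearMap ∘ₗ antipode k) j₂.toLinearMap = et (H ⊗[k] H) counit := by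
    have := algHom_comp_cv j₂ (antipode k) LinearMap.id
    rw [cv_antipode_id, comp_id] at this
    rw [← this]
    ext x
    simp [et_apply]
  have h3 : U = mulLeft k (U 1) ∘ₗ j₂.toLinearMap := by
    conv_lhs => rw [← cv_et_counit U, ← h2, ← cv_assoc, h1, ← mulLeft_comp_cv, et_counit_cv]
  have h4 := congrArg (fun F => F a) h3
  simp only [comp_apply, mulLeft_apply] at h4
  rw [← hU, h4, hU]
  simp [hj₂, Finset.sum_mul]

/-- Maschke's theorem for Hopf algebras. -/
lemma isSemisimpleRing_of_integral {L : H} (hL : ∀ a : H, a * L = counit (R := k) a • L)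
    (hε : counit (R := k) L ≠ 0) : IsSemisimpleRing H := by
  refine (isSemisimpleModule_iff H H).2 ⟨fun I => ?_⟩
  obtain ⟨f, hf⟩ := LinearMap.exists_leftInverse_of_injective
    (I.restrictScalars k).subtype (Submodule.ker_subtype _)
  let f' : H →ₗ[k] H := (I.restrictScalars k).subtype ∘ₗ f
  have hf'I : ∀ v, f' v ∈ I := fun v => (f v).2
  have hf' : ∀ v ∈ I, f' v = v := fun v hv => by
    have := congrArg (fun F => F ⟨v, hv⟩) hf
    simp only [comp_apply, id_apply] at this
    exact congrArg Subtype.val this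
  let X := ℛ k L
  let π : H → H := fun v => (counit (R := k) L)⁻¹ •
    ∑ i ∈ X.index, X.left i * f' (antipode k (X.right i) * v)
  have hπI : ∀ v, π v ∈ I := fun v => by
    have : ∑ i ∈ X.index, X.left i * f' (antipode k (X.right i) * v) ∈ I :=
      Submodule.sum_mem _ fun i _ => I.smul_mem _ (hf'I _)
    exact (I.restrictScalars k).smul_mem _ this
  have hπmul : ∀ a v, π (a * v) = a * π v := by
    intro a v
    have h1 := congrArg (TensorProduct.lift ((LinearMap.mul k H).compl₂
      (f' ∘ₗ mulRight k v))) (casimir hL X a)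
    simp only [map_sum, TensorProduct.lift.tmul, compl₂_apply, comp_apply, mulRight_apply,
      LinearMap.mul_apply', mul_assoc] at h1
    simp only [π]
    rw [mul_smul_comm, Finset.mul_sum, h1]
  let π' : H →ₗ[H] I :=
    { toFun := fun v => ⟨π v, hπI v⟩
      map_add' := fun v w => by
        apply Subtype.ext
        simp [π, mul_add, Finset.sum_add_distrib]
      map_smul' := fun a v => by
        apply Subtype.ext
        simpa using hπmul a v }
  refine ⟨_, LinearMap.isCompl_of_proj (f := π') fun v => Subtype.ext ?_⟩
  change π v = v
  simp only [π]
  have h2 : ∀ i ∈ X.index, X.left i * f' (antipode k (X.right i) * v) =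
      X.left i * antipode k (X.right i) * v := fun i _ => by
    rw [hf' (antipode k (X.right i) * v) (I.smul_mem _ v.2), mul_assoc]
  rw [Finset.sum_congr rfl h2, ← Finset.sum_mul, sum_mul_antipode, smul_mul_assoc, one_mul,
    smul_smul, inv_mul_cancel₀ hε, one_smul]

lemma trace_antipode_sq_eq_zero [FiniteDimensional k H] (hss : ¬ IsSemisimpleRing H) :
    trace k H (antipode k * antipode k : Module.End k H) = 0 := by
  by_contra h
  rw [← counit_traceIntegral_one] at h
  exact hss (isSemisimpleRing_of_integral (mul_traceIntegral _) h)

end Hopf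

section Radford

open Coalgebra LinearMap HopfAlgebra

variable {k : Type*} [Field k] {H : Type*} [Ring H] [HopfAlgebra k H]

/-- The map `f ↦ L₁ f(S(L₂))` attached to an element `L`. -/
noncomputable def frob (L : H) (f : H →ₗ[k] k) : H := actR (f ∘ₗ antipode k) L

lemma mul_frob {L : H} (hL : ∀ a : H, a * L = counit (R := k) a • L) (f : H →ₗ[k] k) (a : H) :
    a * frob L f = frob L (f ∘ₗ mulRight k a) := by
  have h := congrArg (fun t => TensorProduct.rid k H (lTensor H f t)) (casimir hL (ℛ k L) a)
  simp only [map_sum, lTensor_tmul, TensorProduct.rid_tmul] at h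
  simpa [frob, actR_repr (ℛ k L), Finset.mul_sum] using h

lemma sum_coord_cv [FiniteDimensional k H] (f : H →ₗ[k] k) :
    ∑ i, cv ((Module.finBasis k H).coord i)
      ((f ∘ₗ mulRight k (antipode k (antipode k (Module.finBasis k H i)))) ∘ₗ antipode k) =
      f 1 • counit := by
  set b := Module.finBasis k H
  ext x
  simp only [LinearMap.sum_apply, cv_repr (ℛ k x), comp_apply, mulRight_apply]
  rw [Finset.sum_comm]
  have h : ∀ j ∈ (ℛ k x).index, ∑ i, b.coord i ((ℛ k x).left j) *
      f (antipode k ((ℛ k x).right j) * antipode k (antipode k (b i))) =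
      f (antipode k (antipode k ((ℛ k x).left j) * (ℛ k x).right j)) := by
    intro j _
    conv_rhs => rw [antipode_mul_antidistrib, ← b.sum_repr ((ℛ k x).left j), map_sum, map_sum,
      Finset.mul_sum, map_sum]
    simp
  rw [Finset.sum_congr rfl h, ← map_sum, ← map_sum, sum_antipode_mul]
  simp [mul_comm]

lemma frob_injective [FiniteDimensional k H] {L : H} (hL0 : L ≠ 0)
    (hL : ∀ a : H, a * L = counit (R := k) a • L) {f : H →ₗ[k] k} (hf : frob L f = 0) : f = 0 := by
  have h1 : ∀ h : H →ₗ[k] k, (∀ a, frob L (h ∘ₗ mulRight k a) = 0) → h 1 = 0 := by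
    intro h hh
    have e : h 1 • L = 0 := by
      have e1 : h 1 • L = actR (h 1 • counit (R := k) (A := H)) L := by
        rw [map_smul, actR_counit, LinearMap.smul_apply, id_apply]
      rw [e1, ← sum_coord_cv h, map_sum, LinearMap.sum_apply]
      refine Finset.sum_eq_zero fun i _ => ?_
      rw [← actR_comp, comp_apply]
      have := hh (antipode k (antipode k (Module.finBasis k H i)))
      rw [frob] at this
      rw [this, map_zero]
    exact (smul_eq_zero.1 e).resolve_right hL0
  ext a
  have h2 := h1 (f ∘ₗ mulRight k a) (fun c => by
    rw [← mul_frob hL, ← mul_frob hL, hf, mul_zero, mul_zero])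
  simpa using h2

variable (k H) in
/-- A nonzero right integral `lam` of the dual, a right integral `T` with `lam T = 1`, and the two
distinguished group-like elements `g` and `α`. -/
structure IntegralData where
  /-- the right integral of the dual -/
  lam : H →ₗ[k] k
  /-- the right integral -/
  T : H
  /-- the distinguished group-like element of `H` -/
  g : H
  /-- the distinguished group-like element of the dual -/
  α : H →ₐ[k] k
  actL_lam : ∀ x, actL lam x = lam x • (1 : H)
  actR_lam : ∀ x, actR lam x = lam x • g
  exists_eq : ∀ f : H →ₗ[k] k, ∃ a, ∀ x, f x = lam (x * a)
  T_mul : ∀ a, T * a = counit (R := k) a • T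
  lam_T : lam T = 1
  mul_T : ∀ a, a * T = α a • T
  isGroupLike_g : IsGroupLikeElem k g
  antipode_bijective : Function.Bijective (antipode k (A := H))

lemma actR_one (f : H →ₗ[k] k) : actR f (1 : H) = f 1 • (1 : H) := by
  simp [actR, Algebra.TensorProduct.one_def]

lemma exists_integralData (k H : Type*) [Field k] [Ring H] [HopfAlgebra k H]
    [FiniteDimensional k H] [Nontrivial H] : Nonempty (IntegralData k H) := by
  obtain ⟨L, hL0, hL⟩ := exists_leftIntegral k H
  let Φ : (H →ₗ[k] k) →ₗ[k] H :=
    { toFun := frob L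
      map_add' := fun f g => by simp [frob, add_comp]
      map_smul' := fun c f => by simp [frob, smul_comp] }
  have hΦ : ∀ f, Φ f = frob L f := fun _ => rfl
  have hinj : Function.Injective Φ :=
    (injective_iff_map_eq_zero Φ).2 fun f hf => frob_injective hL0 hL hf
  have hsurj : Function.Surjective Φ :=
    (LinearMap.injective_iff_surjective_of_finrank_eq_finrank
      (Subspace.dual_finrank_eq (K := k) (V := H))).1 hinj
  have hSs : Function.Surjective (antipode k (A := H)) := by
    rw [← LinearMap.dualMap_injective_iff]
    refine (injective_iff_map_eq_zero _).2 fun f hf => frob_injective hL0 hL ?_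
    have : f ∘ₗ antipode k = 0 := hf
    rw [frob, this, map_zero, LinearMap.zero_apply]
  have hSi : Function.Injective (antipode k (A := H)) := LinearMap.injective_iff_surjective.2 hSs
  obtain ⟨lam, hlam⟩ := hsurj 1
  have hlam_mul : ∀ a, Φ (lam ∘ₗ mulRight k a) = a := fun a => by
    rw [hΦ, ← mul_frob hL, ← hΦ, hlam, mul_one]
  have hΦcv : ∀ f h, Φ (cv f h) = actR (h ∘ₗ antipode k) (Φ f) := fun f h => by
    rw [hΦ, frob, cv_comp_antipode, ← actR_comp, comp_apply]
    rfl
  have hcv : ∀ f, cv lam f = f 1 • lam := fun f => by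
    apply hinj
    rw [hΦcv, map_smul, hlam, actR_one, comp_apply, antipode_one]
  have hexists : ∀ f : H →ₗ[k] k, ∃ a, ∀ x, f x = lam (x * a) := fun f =>
    ⟨Φ f, fun x => congrArg (fun F => F x) (hinj (hlam_mul (Φ f)).symm)⟩
  set T := antipode k L with hT
  have hTmul : ∀ a, T * a = counit (R := k) a • T := by
    intro a
    obtain ⟨b, rfl⟩ := hSs a
    rw [hT, ← antipode_mul_antidistrib, hL, map_smul, counit_antipode]
  have hlamT : lam T = 1 := by
    have h := counit_actR (lam ∘ₗ antipode k) L
    have h2 : actR (lam ∘ₗ antipode k) L = 1 := hlam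
    rw [h2, Bialgebra.counit_one] at h
    exact h.symm
  have huniq : ∀ μ : H →ₗ[k] k, (∀ f, cv μ f = f 1 • μ) → μ = μ T • lam := by
    intro μ hμ
    have h1 : ∀ f : H →ₗ[k] k, f (antipode k (Φ μ)) = f (counit (R := k) (Φ μ) • 1) := by
      intro f
      have h2 := hΦcv μ f
      rw [hμ, map_smul] at h2
      have h3 := congrArg (counit (R := k)) h2
      rw [counit_actR, map_smul, smul_eq_mul] at h3
      rw [map_smul, smul_eq_mul, mul_comm, h3, comp_apply]
    have h4 : Φ μ = counit (R := k) (Φ μ) • 1 := by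
      apply hSi
      rw [eq_of_forall_dual (k := k) h1, map_smul, antipode_one]
    have h5 : μ = counit (R := k) (Φ μ) • lam := by
      apply hinj
      rw [map_smul, hlam]
      exact h4
    have h6 : μ T = counit (R := k) (Φ μ) := by
      conv_lhs => rw [h5, LinearMap.smul_apply, hlamT, smul_eq_mul, mul_one]
    rw [h6]
    exact h5
  set g := actR lam T with hg
  have hcvg : ∀ f : H →ₗ[k] k, cv f lam = f g • lam := by
    intro f
    rw [hg, dual_actR]
    refine huniq _ fun h => ?_
    rw [cv_assoc, hcv]
    ext x
    simp [cv_repr (ℛ k x), Finset.mul_sum, mul_left_comm]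
  have hactR : ∀ x, actR lam x = lam x • g := fun x => by
    refine eq_of_forall_dual (k := k) fun f => ?_
    rw [dual_actR, hcvg, map_smul, LinearMap.smul_apply, smul_eq_mul, smul_eq_mul, mul_comm]
  have hrint : ∀ T' : H, (∀ a, T' * a = counit (R := k) a • T') → T' = lam T' • T := by
    intro T' hT'
    refine eq_of_forall_dual (k := k) fun f => ?_
    obtain ⟨a, ha⟩ := hexists f
    rw [map_smul, ha, ha, hT', hTmul, map_smul, map_smul, hlamT, smul_eq_mul, smul_eq_mul,
      smul_eq_mul, mul_one, mul_comm]
  have hmulT : ∀ a, a * T = lam (a * T) • T := fun a =>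
    hrint _ fun c => by rw [mul_assoc, hTmul, mul_smul_comm]
  let α : H →ₐ[k] k := AlgHom.ofLinearMap (lam ∘ₗ mulRight k T) (by simp [hlamT]) (by
    intro a b
    simp only [comp_apply, mulRight_apply]
    rw [mul_assoc, hmulT b, mul_smul_comm, map_smul, map_smul, hlamT, smul_eq_mul, smul_eq_mul, mul_one,
      mul_comm])
  have hgl : comul (R := k) g = g ⊗ₜ[k] g := by
    set j₁ : H →ₐ[k] H ⊗[k] H := Algebra.TensorProduct.includeLeft with hj₁
    set j₂ : H →ₐ[k] H ⊗[k] H := Algebra.TensorProduct.includeRight with hj₂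
    have h1 : cv j₂.toLinearMap (et _ lam) = mulRight k (1 ⊗ₜ[k] g) ∘ₗ et _ lam := by
      rw [← comp_actR]
      ext x
      rw [comp_apply, hactR, comp_apply, et_apply]
      simp [hj₂]
    have h2 : comul ∘ₗ actR lam = (mulRight k ((1 : H) ⊗ₜ[k] g) ∘ₗ j₁.toLinearMap) ∘ₗ actR lam := by
      rw [comp_actR, comul_eq_cv, cv_assoc, h1, ← mulRight_comp_cv, ← comp_actR, comp_assoc]
    have h3 := congrArg (fun F => F T) h2
    simp only [comp_apply, ← hg] at h3
    rw [h3]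
    simp [hj₁]
  exact ⟨{ lam := lam
           T := T
           g := g
           α := α
           actL_lam := fun x => by
             refine eq_of_forall_dual (k := k) fun f => ?_
             rw [dual_actL, hcv, map_smul, LinearMap.smul_apply, smul_eq_mul, smul_eq_mul, mul_comm]
           actR_lam := hactR
           exists_eq := hexists
           T_mul := hTmul
           lam_T := hlamT
           mul_T := hmulT
           isGroupLike_g := ⟨by rw [hg, counit_actR, hlamT], hgl⟩
           antipode_bijective := ⟨hSi, hSs⟩ }⟩

namespace IntegralData

variable (D : IntegralData k H)

lemma actL_lam_mulRight (x y : H) : actL (D.lam ∘ₗ mulRight k x) y =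
    cv (et H (D.lam ∘ₗ mulLeft k y)) (antipode k) x := by
  let U : H →ₗ[k] H := ∑ i ∈ (ℛ k y).index,
    (D.lam ∘ₗ mulLeft k ((ℛ k y).left i)).smulRight ((ℛ k y).right i)
  have hU : ∀ x, U x = actL (D.lam ∘ₗ mulRight k x) y := by
    intro x
    simp [U, actL_repr (ℛ k y), LinearMap.sum_apply]
  have h : cv U LinearMap.id = et H (D.lam ∘ₗ mulLeft k y) := by
    ext x
    rw [cv_repr (ℛ k x), et_apply]
    simp only [hU, id_apply]
    rw [← actL_mul (ℛ k x), D.actL_lam]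
    rfl
  rw [← hU, ← h, cv_assoc, cv_id_antipode, cv_et_counit]

lemma actR_lam_mulLeft (x y : H) : actR (D.lam ∘ₗ mulLeft k y) x =
    antipode k (actR (D.lam ∘ₗ mulRight k x) y) * D.g := by
  let N : H →ₗ[k] H := ∑ i ∈ (ℛ k x).index,
    (D.lam ∘ₗ mulRight k ((ℛ k x).right i)).smulRight ((ℛ k x).left i)
  have hN : ∀ y, N y = actR (D.lam ∘ₗ mulLeft k y) x := by
    intro y
    simp [N, actR_repr (ℛ k x), LinearMap.sum_apply]
  have h : cv LinearMap.id N = mulRight k D.g ∘ₗ et H (D.lam ∘ₗ mulRight k x) := by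
    ext y
    rw [cv_repr (ℛ k y), comp_apply, et_apply]
    have h1 := D.actR_lam (y * x)
    rw [actR_repr (reprMul (ℛ k y) (ℛ k x))] at h1
    simp only [reprMul, Finset.sum_product] at h1
    simp only [hN, id_apply, mulRight_apply, comp_apply, smul_mul_assoc, one_mul]
    rw [← h1]
    simp [actR_repr (ℛ k x), Finset.mul_sum]
  have h2 : N = mulRight k D.g ∘ₗ antipode k ∘ₗ actR (D.lam ∘ₗ mulRight k x) := by
    rw [← et_counit_cv N, ← cv_antipode_id, cv_assoc, h, ← mulRight_comp_cv, ← comp_actR]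
  rw [← hN, h2]
  rfl

/-- Radford's formula for the fourth power of the antipode. -/
theorem radford (y : H) : actL D.α.toLinearMap y =
    antipode k (antipode k (antipode k D.g *
      antipode k (antipode k (actR D.α.toLinearMap y)) * D.g)) := by
  obtain ⟨n, hn⟩ := D.exists_eq (D.lam ∘ₗ mulLeft k y)
  have hα : D.lam ∘ₗ mulRight k D.T = D.α.toLinearMap := by
    ext x
    simp [D.mul_T, D.lam_T]
  have hε : D.lam ∘ₗ mulLeft k D.T = counit := by
    ext x
    simp [D.T_mul, D.lam_T]
  have hn' : D.lam ∘ₗ mulLeft k y = D.lam ∘ₗ mulRight k n := LinearMap.ext hn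
  have hS : ∀ x, antipode k x = actL (D.lam ∘ₗ mulRight k x) D.T := fun x => by
    rw [actL_lam_mulRight, hε, et_counit_cv]
  have h1 : actL D.α.toLinearMap y = antipode k (antipode k n) := by
    have := D.actL_lam_mulRight D.T y
    rw [hα, hn', ← comp_actL, comp_apply, ← hS] at this
    exact this
  have hx : n = antipode k (actR (D.lam ∘ₗ mulRight k n) D.T) * D.g := by
    have := D.actR_lam_mulLeft n D.T
    rwa [hε, actR_counit, id_apply] at this
  have h2 := D.actR_lam_mulLeft D.T y
  rw [hα, hn'] at h2
  rw [h2, antipode_mul_antidistrib] at hx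
  rw [h1, ← hx]

end IntegralData

end Radford

section Translations

open Coalgebra LinearMap HopfAlgebra

variable {k : Type*} [Field k] {H : Type*} [Ring H] [HopfAlgebra k H]

lemma actL_map_mul (α : H →ₐ[k] k) (x y : H) :
    actL α.toLinearMap (x * y) = actL α.toLinearMap x * actL α.toLinearMap y := by
  rw [actL_repr (reprMul (ℛ k x) (ℛ k y)), actL_repr (ℛ k x), actL_repr (ℛ k y),
    Finset.sum_mul_sum]
  simp [reprMul, Finset.sum_product, smul_smul, mul_comm]

lemma actR_map_mul (α : H →ₐ[k] k) (x y : H) :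
    actR α.toLinearMap (x * y) = actR α.toLinearMap x * actR α.toLinearMap y := by
  rw [actR_repr (reprMul (ℛ k x) (ℛ k y)), actR_repr (ℛ k x), actR_repr (ℛ k y),
    Finset.sum_mul_sum]
  simp [reprMul, Finset.sum_product, smul_smul, mul_comm]

lemma actL_of_isGroupLikeElem {g : H} (hg : IsGroupLikeElem k g) (f : H →ₗ[k] k) :
    actL f g = f g • g := by
  simp [actL, hg.comul_eq_tmul_self]

lemma actR_of_isGroupLikeElem {g : H} (hg : IsGroupLikeElem k g) (f : H →ₗ[k] k) :
    actR f g = f g • g := by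
  simp [actR, hg.comul_eq_tmul_self]

lemma exists_actL_pow (α : H →ₐ[k] k) (j : ℕ) : ∃ β : H →ₐ[k] k,
    (actL α.toLinearMap : Module.End k H) ^ j = actL β.toLinearMap := by
  induction j with
  | zero =>
    refine ⟨Bialgebra.counitAlgHom k H, ?_⟩
    rw [pow_zero]
    exact actL_counit.symm
  | succ j ih =>
    obtain ⟨β, hβ⟩ := ih
    have h1 : ∀ x, cv β.toLinearMap α.toLinearMap x =
        counit (R := k) (actL α.toLinearMap (actL β.toLinearMap x)) := by
      intro x
      rw [counit_actL, dual_actL]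
    refine ⟨AlgHom.ofLinearMap (cv β.toLinearMap α.toLinearMap) ?_ ?_, ?_⟩
    · rw [h1, actL_of_isGroupLikeElem .one, map_smul, actL_of_isGroupLikeElem .one]
      simp
    · intro x y
      simp only [h1, actL_map_mul, Bialgebra.counit_mul]
    · rw [pow_succ', hβ, Module.End.mul_eq_comp, actL_comp]
      rfl

lemma actR_pow_eq_one {f : H →ₗ[k] k} {n : ℕ} (h : (actL f : Module.End k H) ^ n = 1) :
    (actR f : Module.End k H) ^ n = 1 := by
  have key : ∀ n : ℕ, ∃ c : H →ₗ[k] k, (actL f : Module.End k H) ^ n = actL c ∧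
      (actR f : Module.End k H) ^ n = actR c := by
    intro n
    induction n with
    | zero => exact ⟨counit, actL_counit.symm, actR_counit.symm⟩
    | succ n ih =>
      obtain ⟨c, h1, h2⟩ := ih
      refine ⟨cv c f, ?_, ?_⟩
      · rw [pow_succ', h1, Module.End.mul_eq_comp, actL_comp]
      · rw [pow_succ, h2, Module.End.mul_eq_comp, actR_comp]
  obtain ⟨c, h1, h2⟩ := key n
  have h3 : c = counit := by
    ext x
    rw [← counit_actL, ← h1, h, Module.End.one_apply]
  rw [h2, h3, actR_counit]
  rfl

lemma cv_char_comp_antipode (α : H →ₐ[k] k) :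
    cv α.toLinearMap (α.toLinearMap ∘ₗ antipode k) = counit := by
  have h := algHom_comp_cv α LinearMap.id (antipode k)
  rw [cv_id_antipode, comp_id] at h
  rw [← h]
  ext x
  simp [et_apply]

lemma cv_char_antipode_comp (α : H →ₐ[k] k) :
    cv (α.toLinearMap ∘ₗ antipode k) α.toLinearMap = counit := by
  have h := algHom_comp_cv α (antipode k) LinearMap.id
  rw [cv_antipode_id, comp_id] at h
  rw [← h]
  ext x
  simp [et_apply]

lemma counit_cv (f : H →ₗ[k] k) : cv counit f = f := by
  rw [← et_self (counit (R := k) (A := H)), et_counit_cv]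

lemma cv_counit (f : H →ₗ[k] k) : cv f counit = f := by
  rw [← et_self (counit (R := k) (A := H)), cv_et_counit]

lemma char_comp_antipode_sq (α : H →ₐ[k] k) :
    (α.toLinearMap ∘ₗ antipode k) ∘ₗ antipode k = α.toLinearMap := by
  have h1 : cv ((α.toLinearMap ∘ₗ antipode k) ∘ₗ antipode k) (α.toLinearMap ∘ₗ antipode k) =
      counit := by
    rw [← cv_comp_antipode, cv_char_comp_antipode]
    ext x
    simp
  rw [← cv_counit ((α.toLinearMap ∘ₗ antipode k) ∘ₗ antipode k), ← cv_char_antipode_comp α,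
    ← cv_assoc, h1, counit_cv]

lemma char_antipode_antipode (α : H →ₐ[k] k) (x : H) : α (antipode k (antipode k x)) = α x :=
  congrArg (fun F => F x) (char_comp_antipode_sq α)

variable (k H) in
/-- The square of the antipode. -/
noncomputable def antipodeSq : Module.End k H := antipode k * antipode k

lemma antipodeSq_apply (x : H) : antipodeSq k H x = antipode k (antipode k x) := rfl

lemma antipodeSq_mul (x y : H) :
    antipodeSq k H (x * y) = antipodeSq k H x * antipodeSq k H y := by
  simp [antipodeSq_apply, antipode_mul_antidistrib]

lemma commute_antipodeSq_actL (α : H →ₐ[k] k) :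
    Commute (antipodeSq k H) (actL α.toLinearMap) := by
  ext x
  have h := actL_repr (reprAntipode (reprAntipode (ℛ k x))) α.toLinearMap
  rw [Module.End.mul_apply, Module.End.mul_apply, antipodeSq_apply, antipodeSq_apply, h,
    actL_repr (ℛ k x)]
  simp [reprAntipode, char_antipode_antipode]

lemma commute_antipodeSq_actR (α : H →ₐ[k] k) :
    Commute (antipodeSq k H) (actR α.toLinearMap) := by
  ext x
  have h := actR_repr (reprAntipode (reprAntipode (ℛ k x))) α.toLinearMap
  rw [Module.End.mul_apply, Module.End.mul_apply, antipodeSq_apply, antipodeSq_apply, h,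
    actR_repr (ℛ k x)]
  simp [reprAntipode, char_antipode_antipode]

lemma commute_antipodeSq_mulRight {g : H} (hg : IsGroupLikeElem k g) :
    Commute (antipodeSq k H) (mulRight k g) := by
  ext x
  simp [antipodeSq_mul, antipodeSq_apply g, hg.antipode_antipode]

/-- `Δ(Y y) = W y₁ ⊗ Z y₂`. -/
def ComulTwist (Y W Z : Module.End k H) : Prop :=
  comul ∘ₗ Y = TensorProduct.map W Z ∘ₗ comul

lemma ComulTwist.one : ComulTwist (1 : Module.End k H) 1 1 := by
  ext x
  simp [Module.End.one_eq_id]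

lemma ComulTwist.mul {Y W Z Y' W' Z' : Module.End k H} (h : ComulTwist Y W Z)
    (h' : ComulTwist Y' W' Z') : ComulTwist (Y * Y') (W * W') (Z * Z') := by
  unfold ComulTwist at *
  rw [Module.End.mul_eq_comp, ← comp_assoc, h, comp_assoc, h', ← comp_assoc,
    ← TensorProduct.map_comp]
  rfl

lemma ComulTwist.pow {Y W Z : Module.End k H} (h : ComulTwist Y W Z) (n : ℕ) :
    ComulTwist (Y ^ n) (W ^ n) (Z ^ n) := by
  induction n with
  | zero => exact .one
  | succ n ih => simpa [pow_succ] using ih.mul h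

lemma comulTwist_antipodeSq :
    ComulTwist (antipodeSq k H) (antipodeSq k H) (antipodeSq k H) := by
  ext x
  have h := (reprAntipode (reprAntipode (ℛ k x))).eq
  rw [comp_apply, antipodeSq_apply, ← h, comp_apply, ← (ℛ k x).eq]
  simp [reprAntipode, antipodeSq_apply]

lemma comulTwist_mulRight {g : H} (hg : IsGroupLikeElem k g) :
    ComulTwist (mulRight k g) (mulRight k g) (mulRight k g) := by
  ext x
  rw [comp_apply, mulRight_apply, Bialgebra.comul_mul, hg.comul_eq_tmul_self, comp_apply,
    ← (ℛ k x).eq, Finset.sum_mul]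
  simp

lemma comulTwist_actL (f : H →ₗ[k] k) : ComulTwist (actL f : Module.End k H) (actL f) 1 := by
  have h : TensorProduct.map (actL f) (1 : Module.End k H) ∘ₗ comul =
      cv ((Algebra.TensorProduct.includeLeft : H →ₐ[k] H ⊗[k] H).toLinearMap ∘ₗ actL f)
        (Algebra.TensorProduct.includeRight : H →ₐ[k] H ⊗[k] H).toLinearMap := by
    ext x
    simp [cv_repr (ℛ k x), ← (ℛ k x).eq]
  rw [ComulTwist, h, comp_actL, comp_actL, cv_assoc, ← comul_eq_cv]

lemma ComulTwist.comul_apply {Y W Z : Module.End k H} (h : ComulTwist Y W Z) (y : H) :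
    comul (R := k) (Y y) = TensorProduct.map W Z (comul y) := congrArg (fun F => F y) h

/-- The `H`-linear (in the first factor) endomorphism `x ⊗ y ↦ (x ⊗ 1) F(y)` of `H ⊗ H`. -/
noncomputable def shear (F : H →ₗ[k] H ⊗[k] H) : Module.End k (H ⊗[k] H) :=
  TensorProduct.lift ((LinearMap.mul k (H ⊗[k] H)).compl₁₂
    (Algebra.TensorProduct.includeLeft : H →ₐ[k] H ⊗[k] H).toLinearMap F)

lemma shear_tmul (F : H →ₗ[k] H ⊗[k] H) (x y : H) : shear F (x ⊗ₜ y) = (x ⊗ₜ 1) * F y := by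
  simp [shear]

lemma shear_mul (F : H →ₗ[k] H ⊗[k] H) (x : H) (t : H ⊗[k] H) :
    shear F ((x ⊗ₜ 1) * t) = (x ⊗ₜ 1) * shear F t := by
  induction t with
  | zero => simp
  | add a b ha hb => rw [mul_add, map_add, ha, hb, map_add, mul_add]
  | tmul a b => simp [shear_tmul, ← mul_assoc]

lemma shear_comul_mul_shear : shear (comul (R := k) (A := H)) * shear
    (cv ((Algebra.TensorProduct.includeLeft : H →ₐ[k] H ⊗[k] H).toLinearMap ∘ₗ antipode k)
      (Algebra.TensorProduct.includeRight : H →ₐ[k] H ⊗[k] H).toLinearMap) = 1 := by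
  set j₁ : H →ₐ[k] H ⊗[k] H := Algebra.TensorProduct.includeLeft with hj₁
  set j₂ : H →ₐ[k] H ⊗[k] H := Algebra.TensorProduct.includeRight with hj₂
  have h1 : cv (j₁.toLinearMap ∘ₗ antipode k) j₁.toLinearMap = et (H ⊗[k] H) counit := by
    have := algHom_comp_cv j₁ (antipode k) LinearMap.id
    rw [cv_antipode_id, comp_id] at this
    rw [← this]
    ext x
    simp [et_apply]
  have h2 : ∀ y, shear (comul (R := k) (A := H)) (cv (j₁.toLinearMap ∘ₗ antipode k)
      j₂.toLinearMap y) = 1 ⊗ₜ y := by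
    intro y
    have h3 : j₂.toLinearMap y = cv (j₁.toLinearMap ∘ₗ antipode k) comul y := by
      rw [comul_eq_cv, ← cv_assoc, h1, et_counit_cv]
    rw [← Algebra.TensorProduct.includeRight_apply (R := k), ← hj₂]
    change _ = j₂.toLinearMap y
    rw [h3, cv_repr (ℛ k y), cv_repr (ℛ k y), map_sum]
    simp [hj₁, hj₂, shear_tmul]
  refine TensorProduct.ext' fun x y => ?_
  rw [Module.End.mul_apply, shear_tmul, shear_mul, h2]
  simp

lemma trace_mul_trace_eq [FiniteDimensional k H] {X Y W Z : Module.End k H}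
    (h : ComulTwist Y W Z) (hm : ∀ x y, W (x * y) = X x * W y) :
    trace k H X * trace k H Y = trace k H W * trace k H Z := by
  set Φ := shear (comul (R := k) (A := H))
  obtain ⟨Ψ, hΨ⟩ : ∃ Ψ, Φ * Ψ = 1 := ⟨_, shear_comul_mul_shear⟩
  have h1 : Φ * TensorProduct.map X Y = TensorProduct.map W Z * Φ := by
    refine TensorProduct.ext' fun x y => ?_
    rw [Module.End.mul_apply, Module.End.mul_apply, TensorProduct.map_tmul, shear_tmul,
      shear_tmul, h.comul_apply, ← (ℛ k y).eq]
    simp [Finset.mul_sum, hm]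
  rw [← trace_tensorProduct', ← trace_tensorProduct', ← mul_one (TensorProduct.map W Z), ← hΨ,
    ← mul_assoc, ← h1, mul_assoc, trace_mul_comm, mul_assoc, mul_eq_one_comm.1 hΨ, mul_one]

lemma map_mul_pow {X : Module.End k H} (h : ∀ x y, X (x * y) = X x * X y) (n : ℕ) (x y : H) :
    (X ^ n) (x * y) = (X ^ n) x * (X ^ n) y := by
  induction n with
  | zero => simp
  | succ n ih => simp only [pow_succ', Module.End.mul_apply, ih, h]

lemma trace_sq_mulRight [FiniteDimensional k H] {g : H} (hg : IsGroupLikeElem k g) (n : ℕ) :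
    trace k H (antipodeSq k H ^ n * mulRight k g) ^ 2 =
      trace k H (antipodeSq k H ^ n) * trace k H (antipodeSq k H ^ n * mulRight k g) := by
  rw [sq]
  refine (trace_mul_trace_eq ((comulTwist_antipodeSq.pow n).mul (comulTwist_mulRight hg))
    fun x y => ?_).symm
  simp only [Module.End.mul_apply, mulRight_apply, mul_assoc, map_mul_pow antipodeSq_mul n x]

lemma trace_sq_actL [FiniteDimensional k H] (α : H →ₐ[k] k) (n : ℕ) :
    trace k H (antipodeSq k H ^ n * actL α.toLinearMap) ^ 2 =
      trace k H (antipodeSq k H ^ n) * trace k H (antipodeSq k H ^ n * actL α.toLinearMap) := by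
  rw [sq, mul_comm (trace k H (antipodeSq k H ^ n))]
  have h := (comulTwist_antipodeSq.pow n).mul (comulTwist_actL (H := H) α.toLinearMap)
  rw [mul_one] at h
  refine trace_mul_trace_eq h fun x y => ?_
  simp only [Module.End.mul_apply, actL_map_mul, map_mul_pow antipodeSq_mul n]

lemma trace_antipodeSq_mul_actL [FiniteDimensional k H] (hss : ¬ IsSemisimpleRing H)
    (α : H →ₐ[k] k) : trace k H (antipodeSq k H * actL α.toLinearMap) = 0 := by
  by_cases hα : α.toLinearMap = counit
  · rw [hα, actL_counit, ← Module.End.one_eq_id, mul_one]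
    exact trace_antipode_sq_eq_zero hss
  obtain ⟨b, hb⟩ : ∃ b, α b ≠ counit (R := k) b := by
    by_contra hne
    push Not at hne
    exact hα (LinearMap.ext hne)
  set X : Module.End k H := antipodeSq k H * actL α.toLinearMap with hX
  have hXm : ∀ x y, X (x * y) = X x * X y := fun x y => by
    simp only [hX, Module.End.mul_apply, actL_map_mul, antipodeSq_mul]
  have h1 : ∑ i ∈ (ℛ k b).index, X * mulLeft k ((ℛ k b).left i) *
      mulLeft k (antipode k ((ℛ k b).right i)) = counit (R := k) b • X := by
    ext x
    simp only [LinearMap.sum_apply, Module.End.mul_apply, mulLeft_apply, ← map_sum, ← mul_assoc,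
      ← Finset.sum_mul, sum_mul_antipode (ℛ k b), smul_mul_assoc, one_mul, map_smul,
      LinearMap.smul_apply]
  have h2 : ∑ i ∈ (ℛ k b).index, mulLeft k (antipode k ((ℛ k b).right i)) *
      (X * mulLeft k ((ℛ k b).left i)) = α b • X := by
    have h3 : cv (antipode k ∘ₗ actL α.toLinearMap) LinearMap.id = et H α.toLinearMap := by
      rw [comp_actL, cv_assoc, cv_antipode_id, cv_et_counit]
    have h4 := congrArg (fun F => antipode k (F b)) h3
    simp only [cv_repr (ℛ k b), et_apply, map_sum, map_smul, antipode_one,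
      antipode_mul_antidistrib, comp_apply, id_apply] at h4
    ext x
    simp only [LinearMap.sum_apply, Module.End.mul_apply, mulLeft_apply, hXm, LinearMap.smul_apply,
      ← mul_assoc, ← Finset.sum_mul]
    simp only [hX, Module.End.mul_apply, antipodeSq_apply]
    rw [h4]
    simp
  have h5 : counit (R := k) b * trace k H X = α b * trace k H X := by
    rw [← smul_eq_mul, ← smul_eq_mul, ← map_smul, ← map_smul, ← h1, ← h2, map_sum, map_sum]
    exact Finset.sum_congr rfl fun i _ => trace_mul_comm _ _ _
  by_contra h0
  exact hb (mul_right_cancel₀ h0 h5).symm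

lemma ComulTwist.actR_mul {X : Module.End k H} (h : ComulTwist X X X) (f : H →ₗ[k] k) :
    actR f * X = X * actR (f ∘ₗ X) := by
  ext z
  have h1 : actR f (X z) = TensorProduct.rid k H (lTensor H f (comul (X z))) := rfl
  rw [Module.End.mul_apply, Module.End.mul_apply, actR_repr (ℛ k z), map_sum, h1, h.comul_apply,
    ← (ℛ k z).eq]
  simp

lemma trace_antipodeSq_mul_mulRight [FiniteDimensional k H] (hss : ¬ IsSemisimpleRing H) {g : H}
    (hg : IsGroupLikeElem k g) : trace k H (antipodeSq k H * mulRight k g) = 0 := by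
  by_cases hg1 : g = 1
  · rw [hg1, mulRight_one, ← Module.End.one_eq_id, mul_one]
    exact trace_antipode_sq_eq_zero hss
  obtain ⟨u, hu⟩ : ∃ u : H →ₗ[k] k, u g ≠ u 1 := by
    by_contra hne
    push Not at hne
    exact hg1 (eq_of_forall_dual (k := k) hne)
  set X : Module.End k H := antipodeSq k H * mulRight k g with hX
  have hXc : ComulTwist X X X := comulTwist_antipodeSq.mul (comulTwist_mulRight hg)
  set b := Module.finBasis k H
  have hsum : ∀ (Y : Module.End k H) (c x : H), ∑ i, b.coord i (Y x) * u (c * b i) =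
      u (c * Y x) := fun Y c x => by
    conv_rhs => rw [← b.sum_repr (Y x), Finset.mul_sum, map_sum]
    simp
  let f : Fin (Module.finrank k H) → H →ₗ[k] k := fun i => (u ∘ₗ mulRight k (b i)) ∘ₗ antipode k
  have h1 : ∑ i, cv (f i) (b.coord i) = u 1 • counit := by
    ext x
    simp only [LinearMap.sum_apply, cv_repr (ℛ k x)]
    rw [Finset.sum_comm]
    have h : ∀ j ∈ (ℛ k x).index, ∑ i, f i ((ℛ k x).left j) * b.coord i ((ℛ k x).right j) =
        u (antipode k ((ℛ k x).left j) * (ℛ k x).right j) := fun j _ => by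
      have := hsum 1 (antipode k ((ℛ k x).left j)) ((ℛ k x).right j)
      rw [Module.End.one_apply] at this
      rw [← this]
      simp [f, mul_comm]
    rw [Finset.sum_congr rfl h, ← map_sum, sum_antipode_mul]
    simp [mul_comm]
  have h2 : ∑ i, cv (b.coord i ∘ₗ X) (f i) = u g • counit := by
    ext x
    simp only [LinearMap.sum_apply, cv_repr (ℛ k x)]
    rw [Finset.sum_comm]
    have h : ∀ j ∈ (ℛ k x).index, ∑ i, (b.coord i ∘ₗ X) ((ℛ k x).left j) *
        f i ((ℛ k x).right j) =
        u (antipode k (antipode k ((ℛ k x).left j) * (ℛ k x).right j) * g) := fun j _ => by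
      have := hsum X (antipode k ((ℛ k x).right j)) ((ℛ k x).left j)
      simp only [comp_apply, f, mulRight_apply]
      rw [this, antipode_mul_antidistrib, hX, Module.End.mul_apply, mulRight_apply,
        antipodeSq_mul, antipodeSq_apply g, hg.antipode_antipode, mul_assoc]
      rfl
    rw [Finset.sum_congr rfl h, ← map_sum, ← Finset.sum_mul, ← map_sum, sum_antipode_mul]
    simp [mul_comm]
  have h3 : u 1 • X = ∑ i, X * actR (f i) * actR (b.coord i) := by
    simp only [mul_assoc, Module.End.mul_eq_comp (actR _) (actR _), actR_comp, ← Finset.mul_sum]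
    rw [← map_sum, h1, map_smul, actR_counit, mul_smul_comm, ← Module.End.one_eq_id, mul_one]
  have h4 : u g • X = ∑ i, actR (b.coord i) * (X * actR (f i)) := by
    simp only [← mul_assoc, hXc.actR_mul]
    simp only [mul_assoc, Module.End.mul_eq_comp (actR _) (actR _), actR_comp, ← Finset.mul_sum]
    rw [← map_sum, h2, map_smul, actR_counit, mul_smul_comm, ← Module.End.one_eq_id, mul_one]
  have h5 : u g * trace k H X = u 1 * trace k H X := by
    rw [← smul_eq_mul, ← smul_eq_mul, ← map_smul, ← map_smul, h3, h4, map_sum, map_sum]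
    exact Finset.sum_congr rfl fun i _ => trace_mul_comm _ _ _
  by_contra h0
  exact hu (mul_right_cancel₀ h0 h5)

lemma orderOf_mulRight (g : H) : orderOf (mulRight k g : Module.End k H) = orderOf g := by
  refine orderOf_eq_orderOf_iff.2 fun n => ?_
  rw [pow_mulRight]
  refine ⟨fun h => ?_, fun h => by rw [h, mulRight_one]; rfl⟩
  simpa using congrArg (fun F : Module.End k H => F 1) h

lemma IntegralData.antipodeSq_pow_eq_one (D : IntegralData k H) {n : ℕ} (hg : D.g ^ n = 1)
    (hα : (actL D.α.toLinearMap : Module.End k H) ^ n = 1) : antipodeSq k H ^ (2 * n) = 1 := by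
  have hgl := D.isGroupLike_g
  set g' := antipode k D.g with hg'
  set L : Module.End k H := mulLeft k g'
  set M : Module.End k H := mulRight k D.g
  have hfg : antipodeSq k H D.g = D.g := hgl.antipode_antipode
  have hfg' : antipodeSq k H g' = g' := hgl.antipode.antipode_antipode
  have hrad : (actL D.α.toLinearMap : Module.End k H) =
      antipodeSq k H ^ 2 * (L * M * actR D.α.toLinearMap) := by
    ext y
    rw [D.radford y, ← antipodeSq_apply, ← antipodeSq_apply, ← hg']
    simp [L, M, sq, antipodeSq_mul, hfg, hfg', mul_assoc]
  have hσL : Commute (antipodeSq k H) L := by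
    ext x
    simp [L, antipodeSq_mul, hfg']
  have hσ : Commute (antipodeSq k H) (L * M * actR D.α.toLinearMap) :=
    (hσL.mul_right (commute_antipodeSq_mulRight hgl)).mul_right (commute_antipodeSq_actR D.α)
  have hLM : Commute L M := by
    ext x
    simp [L, M, mul_assoc]
  have hα1 : D.α g' * D.α D.g = 1 := by
    rw [← map_mul, hg', hgl.antipode_mul_cancel, map_one]
  have hact : Commute (L * M) (actR D.α.toLinearMap) := by
    ext x
    simp only [L, M, Module.End.mul_apply, mulLeft_apply, mulRight_apply, actR_map_mul,
      actR_of_isGroupLikeElem hgl, actR_of_isGroupLikeElem hgl.antipode, hg']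
    simp [smul_smul, ← hg', mul_comm (D.α D.g), hα1]
  have hL : L ^ n = 1 := by
    have h1 : g' ^ n * D.g ^ n = 1 := by
      have hc : Commute g' D.g := by
        rw [Commute, SemiconjBy, hg', hgl.antipode_mul_cancel, hgl.mul_antipode_cancel]
      rw [← hc.mul_pow, hg', hgl.antipode_mul_cancel, one_pow]
    rw [hg, mul_one] at h1
    rw [pow_mulLeft, h1, mulLeft_one]
    rfl
  have hM : M ^ n = 1 := by
    rw [pow_mulRight, hg, mulRight_one]
    rfl
  have h2 : _ ^ n = _ ^ n := congrArg (· ^ n) hrad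
  rw [(hσ.pow_left 2).mul_pow, hact.mul_pow, hLM.mul_pow, hL, hM, actR_pow_eq_one hα, hα,
    ← pow_mul] at h2
  simpa using h2.symm

end Translations

section Orders

open Coalgebra LinearMap HopfAlgebra

variable {k : Type*} [Field k] {H : Type*} [Ring H] [HopfAlgebra k H] [FiniteDimensional k H]

lemma isOfFinOrder_of_isGroupLikeElem {g : H} (hg : IsGroupLikeElem k g) : IsOfFinOrder g := by
  have : Finite (GroupLike k H) := (linearIndep_groupLikeVal (R := k) (A := H)).finite
  obtain ⟨n, hn, h⟩ := (isOfFinOrder_iff_pow_eq_one).1 (isOfFinOrder_of_finite (⟨g, hg⟩ : GroupLike k H))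
  exact isOfFinOrder_iff_pow_eq_one.2 ⟨n, hn, congrArg GroupLike.val h⟩

lemma finite_characters : Finite (H →ₐ[k] k) := by
  have h : LinearIndependent k fun α : H →ₐ[k] k => α.toLinearMap := by
    have h1 : LinearIndependent k fun α : H →ₐ[k] k => (α : H → k) :=
      (linearIndependent_monoidHom H k).comp (fun α : H →ₐ[k] k => (α : H →* k))
        fun α β hαβ => AlgHom.ext fun x => congrArg (fun F : H →* k => F x) hαβ
    exact LinearIndependent.of_comp (LinearMap.ltoFun k H k k) h1
  exact h.finite

lemma isOfFinOrder_actL (α : H →ₐ[k] k) :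
    IsOfFinOrder (actL α.toLinearMap : Module.End k H) := by
  choose β hβ using exists_actL_pow (H := H) α
  have : Finite (H →ₐ[k] k) := finite_characters
  obtain ⟨i, j, hij, h⟩ := Finite.exists_ne_map_eq_of_infinite β
  have hu : IsUnit (actL α.toLinearMap : Module.End k H) := by
    refine IsUnit.of_mul_eq_one (actL (α.toLinearMap ∘ₗ antipode k)) ?_
    rw [Module.End.mul_eq_comp, actL_comp, cv_char_antipode_comp, actL_counit]
    rfl
  have h2 : (actL α.toLinearMap : Module.End k H) ^ i = actL α.toLinearMap ^ j := by
    rw [hβ, hβ, h]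
  obtain ⟨u, hu⟩ := hu
  rw [← hu] at h2 ⊢
  rw [Units.isOfFinOrder_val]
  by_contra hinf
  exact hij (injective_pow_iff_not_isOfFinOrder.2 hinf
    (Units.ext (by simpa using h2) : u ^ i = u ^ j))

lemma trace_sq_mulRight_pow {g : H} (hg : IsGroupLikeElem k g) (j : ℕ) :
    trace k H (mulRight k g ^ j) ^ 2 = Module.finrank k H * trace k H (mulRight k g ^ j) := by
  have h := trace_sq_mulRight (hg.pow (n := j)) 0
  rwa [pow_zero, one_mul, trace_one, ← pow_mulRight] at h

lemma trace_sq_actL_pow (α : H →ₐ[k] k) (j : ℕ) :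
    trace k H (actL α.toLinearMap ^ j) ^ 2 =
      Module.finrank k H * trace k H (actL α.toLinearMap ^ j) := by
  obtain ⟨β, hβ⟩ := exists_actL_pow (H := H) α j
  have h := trace_sq_actL β 0
  rwa [pow_zero, one_mul, trace_one, ← hβ] at h

lemma trace_antipodeSq_mul_actL_pow (hss : ¬ IsSemisimpleRing H) (α : H →ₐ[k] k) (j : ℕ) :
    trace k H (antipodeSq k H * actL α.toLinearMap ^ j) = 0 := by
  obtain ⟨β, hβ⟩ := exists_actL_pow (H := H) α j
  rw [hβ, trace_antipodeSq_mul_actL hss]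

lemma trace_antipodeSq_mul_mulRight_pow (hss : ¬ IsSemisimpleRing H) {g : H}
    (hg : IsGroupLikeElem k g) (j : ℕ) :
    trace k H (antipodeSq k H * mulRight k g ^ j) = 0 := by
  rw [pow_mulRight, trace_antipodeSq_mul_mulRight hss hg.pow]

lemma IntegralData.α_g_eq_one (D : IntegralData k H) (h : (orderOf D.g).Coprime
    (orderOf (actL D.α.toLinearMap : Module.End k H))) : D.α D.g = 1 := by
  have hgl := D.isGroupLike_g
  have h1 : D.α D.g ^ orderOf D.g = 1 := by rw [← map_pow, pow_orderOf_eq_one, map_one]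
  have h2 : ∀ j : ℕ, ((actL D.α.toLinearMap : Module.End k H) ^ j) D.g = D.α D.g ^ j • D.g := by
    intro j
    induction j with
    | zero => simp
    | succ j ih =>
      rw [pow_succ', Module.End.mul_apply, ih, map_smul, actL_of_isGroupLikeElem hgl, smul_smul]
      simp [pow_succ]
  have h3 := h2 (orderOf (actL D.α.toLinearMap : Module.End k H))
  rw [pow_orderOf_eq_one, Module.End.one_apply] at h3
  have h4 := congrArg D.α h3
  rw [map_smul, smul_eq_mul] at h4
  have h5 : D.α D.g ≠ 0 := fun h0 => by
    rw [h0, zero_pow (isOfFinOrder_of_isGroupLikeElem hgl).orderOf_pos.ne'] at h1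
    exact zero_ne_one h1
  have h6 := orderOf_dvd_of_pow_eq_one h1
  have h7 := orderOf_dvd_of_pow_eq_one ((mul_eq_right₀ h5).1 h4.symm)
  exact orderOf_eq_one_iff.1 (Nat.eq_one_of_dvd_coprimes h h6 h7)

end Orders

section OrderTrace

open LinearMap

variable {k : Type*} [Field k] [IsAlgClosed k] [CharZero k] {V : Type*} [AddCommGroup V]
  [Module k V] [FiniteDimensional k V] {T : Module.End k V}

lemma trace_pow_eq_zero_of_lt_orderOf
    (hsq : ∀ j, trace k V (T ^ j) ^ 2 = Module.finrank k V * trace k V (T ^ j)) (j : ℕ)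
    (h0 : 0 < j) (hj : j < orderOf T) : trace k V (T ^ j) = 0 :=
  trace_eq_zero_of_sq (h0.trans hj)
    (by rw [← pow_mul, mul_comm, pow_mul, pow_orderOf_eq_one, one_pow]) (hsq j)
    (pow_ne_one_of_lt_orderOf h0.ne' hj)

lemma orderOf_mul_finrank_range_cycAvg (hT : IsOfFinOrder T)
    (hsq : ∀ j, trace k V (T ^ j) ^ 2 = Module.finrank k V * trace k V (T ^ j)) :
    orderOf T * Module.finrank k (range (cycAvg (orderOf T) T)) = Module.finrank k V := by
  have h := trace_cycAvg_of_free hT.orderOf_pos (trace_pow_eq_zero_of_lt_orderOf hsq)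
  rw [trace_of_isIdempotentElem
    (isIdempotentElem_cycAvg hT.orderOf_pos (pow_orderOf_eq_one T))] at h
  exact_mod_cast h

end OrderTrace

section Main

open Coalgebra LinearMap HopfAlgebra

variable {k : Type*} [Field k] [IsAlgClosed k] [CharZero k] {H : Type*} [Ring H]
  [HopfAlgebra k H] [FiniteDimensional k H]

lemma orderOf_dvd_finrank {g : H} (hg : IsGroupLikeElem k g) : orderOf g ∣ Module.finrank k H := by
  have hf : IsOfFinOrder (mulRight k g : Module.End k H) := by
    rw [← orderOf_pos_iff, orderOf_mulRight]
    exact (isOfFinOrder_of_isGroupLikeElem hg).orderOf_pos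
  rw [← orderOf_mulRight (k := k) g]
  exact ⟨_, (orderOf_mul_finrank_range_cycAvg hf (trace_sq_mulRight_pow hg)).symm⟩

lemma orderOf_actL_dvd_finrank (α : H →ₐ[k] k) :
    orderOf (actL α.toLinearMap : Module.End k H) ∣ Module.finrank k H :=
  ⟨_, (orderOf_mul_finrank_range_cycAvg (isOfFinOrder_actL α) (trace_sq_actL_pow α)).symm⟩

lemma isSemisimpleRing_of_orderOf_mul_orderOf {g : H} (hg : IsGroupLikeElem k g) (α : H →ₐ[k] k)
    (hαg : α g = 1)
    (h : orderOf g * orderOf (actL α.toLinearMap : Module.End k H) = Module.finrank k H) :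
    IsSemisimpleRing H := by
  by_contra hss
  set R : Module.End k H := actL α.toLinearMap with hR
  have hRf : IsOfFinOrder R := isOfFinOrder_actL α
  have hgf : IsOfFinOrder g := isOfFinOrder_of_isGroupLikeElem hg
  set E := cycAvg (orderOf R) R with hE
  have hEi : IsIdempotentElem E := isIdempotentElem_cycAvg hRf.orderOf_pos (pow_orderOf_eq_one R)
  have hrank : Module.finrank k (range E) = orderOf g := by
    have h1 := orderOf_mul_finrank_range_cycAvg hRf (trace_sq_actL_pow α)
    rw [← h, mul_comm (orderOf g)] at h1
    exact Nat.eq_of_mul_eq_mul_left hRf.orderOf_pos h1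
  have hRg : ∀ i j : ℕ, (R ^ j) (g ^ i) = g ^ i := by
    intro i j
    induction j with
    | zero => simp
    | succ j ih =>
      rw [pow_succ, Module.End.mul_apply, hR, actL_of_isGroupLikeElem hg.pow]
      simpa [hαg] using ih
  have hEg : ∀ i : ℕ, E (g ^ i) = g ^ i := by
    intro i
    have hne : (orderOf R : k) ≠ 0 := by exact_mod_cast hRf.orderOf_pos.ne'
    simp only [hE, cycAvg, LinearMap.smul_apply, LinearMap.sum_apply, hRg, Finset.sum_const,
      Finset.card_range]
    rw [← Nat.cast_smul_eq_nsmul k, smul_smul, inv_mul_cancel₀ hne, one_smul]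
  have hli : LinearIndependent k fun i : Fin (orderOf g) => g ^ (i : ℕ) := by
    refine (linearIndep_groupLikeVal (R := k) (A := H)).comp
      (fun i : Fin (orderOf g) => (⟨g ^ (i : ℕ), hg.pow⟩ : GroupLike k H)) fun i j hij => ?_
    exact Fin.ext (pow_injOn_Iio_orderOf i.2 j.2 (congrArg GroupLike.val hij))
  have hspan : Submodule.span k (Set.range fun i : Fin (orderOf g) => g ^ (i : ℕ)) = range E := by
    refine Submodule.eq_of_le_of_finrank_eq ?_ ?_
    · rw [Submodule.span_le]
      rintro _ ⟨i, rfl⟩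
      exact ⟨_, hEg i⟩
    · rw [finrank_span_eq_card hli, Fintype.card_fin, hrank]
  have hfix : ∀ y ∈ range E, antipodeSq k H y = y := by
    intro y hy
    rw [← hspan] at hy
    induction hy using Submodule.span_induction with
    | mem x hx =>
      obtain ⟨i, rfl⟩ := hx
      exact (hg.pow (n := i)).antipode_antipode
    | zero => exact map_zero _
    | add x y _ _ hx hy => rw [map_add, hx, hy]
    | smul c x _ hx => rw [map_smul, hx]
  have hσE : antipodeSq k H * E = E := LinearMap.ext fun x => hfix _ ⟨x, rfl⟩
  have h1 := trace_mul_cycAvg (orderOf R) R (antipodeSq k H)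
  rw [← hE, hσE, trace_of_isIdempotentElem hEi, hrank,
    Finset.sum_eq_zero fun j _ => trace_antipodeSq_mul_actL_pow hss α j, mul_zero] at h1
  exact hgf.orderOf_pos.ne' (by exact_mod_cast h1)

namespace IntegralData

variable (D : IntegralData k H)

lemma trace_antipodeSq_pow (hss : ¬ IsSemisimpleRing H) {r s : ℕ} (hr : r.Prime) (hrodd : Odd r)
    (hs : Odd s) (hN : Module.finrank k H = r * s) (hg : orderOf D.g ∣ r)
    (hα : orderOf (actL D.α.toLinearMap : Module.End k H) ∣ r)
    (hne : orderOf D.g ≠ 1 ∨ orderOf (actL D.α.toLinearMap : Module.End k H) ≠ 1) :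
    antipodeSq k H ^ (2 * r) = 1 ∧ r ≤ s ∧
      ∃ d : ℤ, Odd d ∧ trace k H (antipodeSq k H ^ r) = (r : k) ^ 2 * d := by
  have hσ := D.antipodeSq_pow_eq_one (orderOf_dvd_iff_pow_eq_one.1 hg)
    (orderOf_dvd_iff_pow_eq_one.1 hα)
  refine ⟨hσ, ?_⟩
  have hgl := D.isGroupLike_g
  rcases hne with h | h
  · have ho : orderOf (mulRight k D.g : Module.End k H) = r := by
      rw [orderOf_mulRight]
      exact (hr.eq_one_or_self_of_dvd _ hg).resolve_left h
    refine trace_pow_eq_sq_mul_odd hr hrodd hs (commute_antipodeSq_mulRight hgl)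
      (by rw [← ho, pow_orderOf_eq_one]) hσ hN (trace_antipodeSq_mul_mulRight_pow hss hgl)
      (fun j h0 hj => trace_pow_eq_zero_of_lt_orderOf (trace_sq_mulRight_pow hgl) j h0
        (by rwa [ho])) (trace_sq_mulRight hgl r)
  · have ho := (hr.eq_one_or_self_of_dvd _ hα).resolve_left h
    refine trace_pow_eq_sq_mul_odd hr hrodd hs (commute_antipodeSq_actL D.α)
      (by rw [← ho, pow_orderOf_eq_one]) hσ hN (trace_antipodeSq_mul_actL_pow hss D.α)
      (fun j h0 hj => trace_pow_eq_zero_of_lt_orderOf (trace_sq_actL_pow D.α) j h0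
        (by rwa [ho])) (trace_sq_actL D.α r)

lemma orderOf_ne_one (hss : ¬ IsSemisimpleRing H) (hodd : Odd (Module.finrank k H)) :
    orderOf D.g ≠ 1 ∨ orderOf (actL D.α.toLinearMap : Module.End k H) ≠ 1 := by
  by_contra! h
  have hσ := D.antipodeSq_pow_eq_one (n := 1) (by simpa using orderOf_eq_one_iff.1 h.1)
    (by simpa using orderOf_eq_one_iff.1 h.2)
  obtain ⟨a, b, h1, h2⟩ := exists_trace_involution hσ (IsIdempotentElem.one)
    (Commute.one_right (antipodeSq k H))
  have h3 : trace k H (antipodeSq k H) = 0 := trace_antipode_sq_eq_zero hss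
  rw [mul_one, h3] at h2
  rw [trace_one] at h1
  have h4 : a = b := by exact_mod_cast (sub_eq_zero.1 h2.symm)
  have h5 : Module.finrank k H = a + b := by exact_mod_cast h1
  rw [h5, h4, ← two_mul] at hodd
  exact (Nat.not_odd_iff_even.2 (even_two_mul b)) hodd

/-- In dimension `p q` both distinguished group-like elements have order dividing the same prime. -/
lemma exists_prime_orderOf_dvd (hss : ¬ IsSemisimpleRing H) {p q : ℕ} (hp : p.Prime)
    (hq : q.Prime) (hdim : Module.finrank k H = p * q) :
    (orderOf D.g ∣ p ∧ orderOf (actL D.α.toLinearMap : Module.End k H) ∣ p) ∨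
    (orderOf D.g ∣ q ∧ orderOf (actL D.α.toLinearMap : Module.End k H) ∣ q) := by
  have hgl := D.isGroupLike_g
  have hcounit : (actL (Bialgebra.counitAlgHom k H).toLinearMap : Module.End k H) = 1 := actL_counit
  have hg := orderOf_dvd_finrank hgl
  have hα := orderOf_actL_dvd_finrank (H := H) D.α
  have hgN : orderOf D.g ≠ p * q := fun h =>
    hss (isSemisimpleRing_of_orderOf_mul_orderOf hgl (Bialgebra.counitAlgHom k H)
      hgl.counit_eq_one (by rw [hcounit, orderOf_one, mul_one, h, hdim]))
  have hαN : orderOf (actL D.α.toLinearMap : Module.End k H) ≠ p * q := fun h =>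
    hss (isSemisimpleRing_of_orderOf_mul_orderOf (k := k) (g := (1 : H)) .one D.α (map_one _)
      (by rw [orderOf_one, one_mul, h, hdim]))
  have hmix : ∀ {a b : ℕ}, a.Prime → b.Prime → a * b = p * q → orderOf D.g = a →
      orderOf (actL D.α.toLinearMap : Module.End k H) = b → a = b := by
    intro a b ha hb hab h1 h2
    by_contra hne
    refine hss (isSemisimpleRing_of_orderOf_mul_orderOf hgl D.α (D.α_g_eq_one ?_)
      (by rw [h1, h2, hab, hdim]))
    rw [h1, h2]
    exact (Nat.coprime_primes ha hb).2 hne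
  have hdiv : ∀ {m : ℕ}, m ∣ p * q → m ≠ p * q → m = 1 ∨ m = p ∨ m = q := by
    intro m hm hne
    obtain ⟨a, b, ha, hb, rfl⟩ := (Nat.dvd_mul).1 hm
    rcases (Nat.dvd_prime hp).1 ha with rfl | rfl <;> rcases (Nat.dvd_prime hq).1 hb with rfl | rfl
      <;> simp_all
  rw [hdim] at hg hα
  rcases hdiv hg hgN with h1 | h1 | h1 <;> rcases hdiv hα hαN with h2 | h2 | h2 <;>
    simp only [h1, h2, one_dvd, dvd_refl, true_and, and_true, true_or, or_true]
  · exact Or.inl (hmix hp hq rfl h1 h2 ▸ dvd_rfl)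
  · exact Or.inr (hmix hq hp (mul_comm _ _) h1 h2 ▸ dvd_rfl)

end IntegralData

end Main

end HopfPQ

/-- Theorem 6.4. If `H` is a non-semisimple Hopf algebra of dimension `p q`,
where `p ≤ q` are odd primes, over an algebraically closed field of characteristic `0`, then
`S^{4p} = id` and `Tr(S^{2p}) = p² d` for some odd integer `d`. -/
theorem stmt3 (k : Type*) [Field k] [IsAlgClosed k] [CharZero k]
    (p q : ℕ) (hp : p.Prime) (hq : q.Prime) (hpodd : Odd p) (hqodd : Odd q) (hpq : p ≤ q)
    (H : Type*) [Ring H] [HopfAlgebra k H] [FiniteDimensional k H]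
    (hdim : Module.finrank k H = p * q) (hss : ¬ IsSemisimpleRing H) :
    (HopfAlgebra.antipode (R := k) (A := H) : Module.End k H) ^ (4 * p) = 1 ∧
      ∃ d : ℤ, Odd d ∧
        LinearMap.trace k H ((HopfAlgebra.antipode (R := k) (A := H) : Module.End k H) ^ (2 * p))
          = (p : k) ^ 2 * (d : k) := by
  have hpos : 0 < Module.finrank k H := hdim ▸ Nat.mul_pos hp.pos hq.pos
  have : Nontrivial H := Module.nontrivial_of_finrank_pos hpos
  obtain ⟨D⟩ := HopfPQ.exists_integralData k H
  have hne := D.orderOf_ne_one hss (hdim ▸ hpodd.mul hqodd)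
  have key : HopfPQ.antipodeSq k H ^ (2 * p) = 1 ∧ ∃ d : ℤ, Odd d ∧
      LinearMap.trace k H (HopfPQ.antipodeSq k H ^ p) = (p : k) ^ 2 * d := by
    rcases D.exists_prime_orderOf_dvd hss hp hq hdim with ⟨h1, h2⟩ | ⟨h1, h2⟩
    · obtain ⟨h3, -, h4⟩ := D.trace_antipodeSq_pow hss hp hpodd hqodd hdim h1 h2 hne
      exact ⟨h3, h4⟩
    · obtain ⟨h3, hle, h4⟩ := D.trace_antipodeSq_pow hss hq hqodd hpodd
        (hdim.trans (mul_comm p q)) h1 h2 hne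
      obtain rfl : p = q := le_antisymm hpq hle
      exact ⟨h3, h4⟩
  have hsq : HopfPQ.antipodeSq k H =
      (HopfAlgebra.antipode (R := k) (A := H) : Module.End k H) ^ 2 := (sq _).symm
  rw [hsq, ← pow_mul, ← pow_mul, ← mul_assoc] at key
  exact key
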